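/- Let p_1 < p_2 < ... denote the sequence of all primes, let k ≥ 0 be an integer, and for n ≥ 1 set 𝒮(n) = ∑_{d | n} d·φ(d). Then the limit as N → ∞ of (∑_{i=1}^N p_i^k · 𝒮(p_i − 1)) / (∑_{i=1}^N p_i^k · (p_i − 1)²) exists and equals Stephens' constant S = ∏_p (1 − p/(p³ − 1)), the infinite product over all primes p. -/

import Mathlib

open Filter

/-- `𝒮(n) = ∑_{d | n} d·φ(d)`. -/
def stephensSum (n : ℕ) : ℕ := ∑ d ∈ n.divisors, d * d.totient

/-- Stephens' constant `S = ∏_p (1 - p/(p³ - 1))`, product over all primes. -/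
noncomputable def stephensConstant : ℝ :=
  ∏' p : Nat.Primes, (1 - ((p : ℕ) : ℝ) / (((p : ℕ) : ℝ) ^ 3 - 1))

section Part1
open Filter MeasureTheory Topology

lemma exists_prob_of_weights (c x : ℕ → ℝ) (hc : ∀ n, 0 ≤ c n) (hs : HasSum c 1) :
    ∃ P : ProbabilityMeasure ℝ,
      (∀ t : ℝ, charFun (P : Measure ℝ) t
        = ∑' n, (c n : ℂ) * Complex.exp (t * x n * Complex.I)) ∧
      (∀ h : BoundedContinuousFunction ℝ ℝ, ∫ u, h u ∂(P : Measure ℝ) = ∑' n, c n * h (x n)) := by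
  have hs' : HasSum (fun n => ENNReal.ofReal (c n)) 1 := by
    have := ENNReal.ofReal_tsum_of_nonneg hc hs.summable
    rw [hs.tsum_eq, ENNReal.ofReal_one] at this
    rw [this]
    exact ENNReal.summable.hasSum
  let p : PMF ℕ := ⟨fun n => ENNReal.ofReal (c n), hs'⟩
  have hp : ∀ n, (p n).toReal = c n := fun n => ENNReal.toReal_ofReal (hc n)
  have hx : Measurable x := measurable_from_top
  refine ⟨⟨p.toMeasure.map x, Measure.isProbabilityMeasure_map hx.aemeasurable⟩, ?_, ?_⟩
  · intro t
    rw [charFun_apply_real]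
    simp only [ProbabilityMeasure.coe_mk]
    rw [integral_map hx.aemeasurable (by fun_prop), PMF.integral_eq_tsum]
    · simp [hp]
    · refine Integrable.of_bound (C := 1) (by fun_prop) (Eventually.of_forall fun n => ?_)
      rw [show (t : ℂ) * x n * Complex.I = ((t * x n : ℝ) : ℂ) * Complex.I by push_cast; ring,
        Complex.norm_exp_ofReal_mul_I]
  · intro h
    simp only [ProbabilityMeasure.coe_mk]
    rw [integral_map hx.aemeasurable h.continuous.aestronglyMeasurable, PMF.integral_eq_tsum]
    · simp [hp]
    · exact Integrable.of_bound (C := ‖h‖)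
        (h.continuous.measurable.comp hx).aestronglyMeasurable
        (Eventually.of_forall fun n => h.norm_coe_le_norm _)

lemma exists_prob_of_density (k : ℝ → ℝ) (hk : ∀ u, 0 ≤ k u) (hkc : Continuous k)
    (hki : Integrable k) (h1 : ∫ u, k u = 1) :
    ∃ P : ProbabilityMeasure ℝ,
      (∀ t : ℝ, charFun (P : Measure ℝ) t
        = ∫ u, (k u : ℂ) * Complex.exp (t * u * Complex.I)) ∧
      (∀ h : BoundedContinuousFunction ℝ ℝ, ∫ u, h u ∂(P : Measure ℝ) = ∫ u, k u * h u) := by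
  have hpr : IsProbabilityMeasure (volume.withDensity fun u => ENNReal.ofReal (k u)) := by
    constructor
    rw [withDensity_apply _ MeasurableSet.univ, Measure.restrict_univ,
      ← ofReal_integral_eq_lintegral_ofReal hki (Eventually.of_forall hk), h1, ENNReal.ofReal_one]
  have hm : Measurable fun u => ENNReal.ofReal (k u) := hkc.measurable.ennreal_ofReal
  refine ⟨⟨_, hpr⟩, fun t => ?_, fun h => ?_⟩
  · rw [charFun_apply_real]
    simp only [ProbabilityMeasure.coe_mk]
    rw [integral_withDensity_eq_integral_toReal_smul hm (by simp)]
    simp [ENNReal.toReal_ofReal (hk _)]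
  · simp only [ProbabilityMeasure.coe_mk]
    rw [integral_withDensity_eq_integral_toReal_smul hm (by simp)]
    simp [ENNReal.toReal_ofReal (hk _)]

lemma levy_weights (c x : ℕ → ℕ → ℝ) (hc : ∀ N n, 0 ≤ c N n) (hs : ∀ N, Summable (c N))
    (k : ℝ → ℝ) (hk : ∀ u, 0 ≤ k u) (hkc : Continuous k)
    (hki : Integrable k) (A : ℝ) (hA : 0 < A) (hpos : 0 < ∫ u, k u)
    (hlim : ∀ t : ℝ, Tendsto (fun N => ∑' n, (c N n : ℂ) * Complex.exp (t * x N n * Complex.I))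
      atTop (𝓝 (A * ∫ u, (k u : ℂ) * Complex.exp (t * u * Complex.I))))
    (h : BoundedContinuousFunction ℝ ℝ) :
    Tendsto (fun N => ∑' n, c N n * h (x N n)) atTop (𝓝 (A * ∫ u, k u * h u)) := by
  set M := ∫ u, k u with hM
  set m : ℕ → ℝ := fun N => ∑' n, c N n with hm
  have hmlim : Tendsto m atTop (𝓝 (A * M)) := by
    have h0 := hlim 0
    simp only [Complex.ofReal_zero, zero_mul, Complex.exp_zero, mul_one] at h0
    rw [integral_complex_ofReal] at h0
    simp_rw [← Complex.ofReal_tsum] at h0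
    exact_mod_cast (Complex.continuous_re.tendsto _).comp h0
  have hAM : 0 < A * M := mul_pos hA hpos
  have hmpos : ∀ᶠ N in atTop, 0 < m N := hmlim.eventually_const_lt hAM
  have key : ∀ N, ∃ P : ProbabilityMeasure ℝ, 0 < m N →
      (∀ t : ℝ, charFun (P : Measure ℝ) t
        = (m N : ℂ)⁻¹ * ∑' n, (c N n : ℂ) * Complex.exp (t * x N n * Complex.I)) ∧
      (∀ h : BoundedContinuousFunction ℝ ℝ,
        ∫ u, h u ∂(P : Measure ℝ) = (m N)⁻¹ * ∑' n, c N n * h (x N n)) := by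
    intro N
    by_cases hN : 0 < m N
    · obtain ⟨P, h1, h2⟩ := exists_prob_of_weights (fun n => (m N)⁻¹ * c N n) (x N)
        (fun n => mul_nonneg (inv_nonneg.2 hN.le) (hc N n)) (by
          have := (hs N).hasSum.mul_left (m N)⁻¹
          rwa [show (∑' n, c N n) = m N from rfl, inv_mul_cancel₀ hN.ne'] at this)
      refine ⟨P, fun _ => ⟨fun t => ?_, fun h => ?_⟩⟩
      · rw [h1, ← tsum_mul_left]; congr 1; ext n; push_cast; ring
      · rw [h2, ← tsum_mul_left]; congr 1; ext n; ring
    · exact ⟨⟨Measure.dirac 0, inferInstance⟩, fun h => absurd h hN⟩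
  choose P hP using key
  obtain ⟨P0, h01, h02⟩ := exists_prob_of_density (fun u => M⁻¹ * k u)
    (fun u => mul_nonneg (inv_nonneg.2 hpos.le) (hk u)) (by fun_prop) (hki.const_mul _)
    (by rw [integral_const_mul, inv_mul_cancel₀ hpos.ne'])
  have hconv : Tendsto P atTop (𝓝 P0) := by
    rw [ProbabilityMeasure.tendsto_iff_tendsto_charFun]
    intro t
    have e1 : (fun N => (m N : ℂ)⁻¹ * ∑' n, (c N n : ℂ) * Complex.exp (t * x N n * Complex.I))
        =ᶠ[atTop] fun N => charFun (P N : Measure ℝ) t := by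
      filter_upwards [hmpos] with N hN
      rw [(hP N hN).1]
    refine Tendsto.congr' e1 ?_
    have e2 : charFun (P0 : Measure ℝ) t = ((A * M : ℝ) : ℂ)⁻¹ *
        (A * ∫ u, (k u : ℂ) * Complex.exp (t * u * Complex.I)) := by
      rw [h01]
      have : ∀ u : ℝ, ((M⁻¹ * k u : ℝ) : ℂ) * Complex.exp (t * u * Complex.I)
        = (M : ℂ)⁻¹ * ((k u : ℂ) * Complex.exp (t * u * Complex.I)) := by
        intro u; push_cast; ring
      simp_rw [this]
      rw [integral_const_mul]
      have hA' : (A : ℂ) ≠ 0 := by exact_mod_cast hA.ne'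
      push_cast
      rw [mul_inv_rev, mul_assoc, inv_mul_cancel_left₀ hA']
    rw [e2]
    refine Tendsto.mul (Tendsto.inv₀ ((Complex.continuous_ofReal.tendsto _).comp hmlim) ?_) (hlim t)
    exact_mod_cast hAM.ne'
  have h3 := (ProbabilityMeasure.tendsto_iff_forall_integral_tendsto.1 hconv) h
  have h4 := hmlim.mul h3
  rw [h02] at h4
  have e3 : A * M * ∫ u, M⁻¹ * k u * h u = A * ∫ u, k u * h u := by
    simp_rw [mul_assoc M⁻¹]
    rw [integral_const_mul]
    field_simp
  rw [e3] at h4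
  refine h4.congr' ?_
  filter_upwards [hmpos] with N hN
  rw [(hP N hN).2, mul_inv_cancel_left₀ hN.ne']

end Part1

section Part2
open Filter MeasureTheory Topology

/-- Fourier-type kernel. -/
noncomputable def fK (g : ℝ → ℂ) (u : ℝ) : ℂ := ∫ t, g t * Complex.exp (-(t * u : ℝ) * Complex.I)

lemma norm_cexp_neg_mul_I (x : ℝ) : ‖Complex.exp (-(x : ℂ) * Complex.I)‖ = 1 := by
  rw [← Complex.ofReal_neg, Complex.norm_exp_ofReal_mul_I]

lemma integrable_mul_cexp {g : ℝ → ℂ} (hg : Integrable g) (u : ℝ) :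
    Integrable fun t => g t * Complex.exp (-(t * u : ℝ) * Complex.I) := by
  refine hg.mul_bdd (c := 1) (by fun_prop) (Eventually.of_forall fun t => ?_)
  rw [norm_cexp_neg_mul_I]

lemma continuous_fK {g : ℝ → ℂ} (hg : Integrable g) : Continuous (fK g) := by
  unfold fK
  refine continuous_of_dominated (bound := fun t => ‖g t‖)
    (fun u => (integrable_mul_cexp hg u).aestronglyMeasurable)
    (fun u => Eventually.of_forall fun t => ?_) hg.norm (Eventually.of_forall fun t => ?_)
  · rw [norm_mul, norm_cexp_neg_mul_I, mul_one]
  · fun_prop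

/-- the coefficients `f n / n^σ` -/
noncomputable def wa (f : ℕ → ℝ) (σ : ℝ) (n : ℕ) : ℝ := f n * (n : ℝ) ^ (-σ)

lemma wa_nonneg {f : ℕ → ℝ} (hf : ∀ n, 0 ≤ f n) (σ : ℝ) (n : ℕ) : 0 ≤ wa f σ n :=
  mul_nonneg (hf n) (Real.rpow_nonneg (Nat.cast_nonneg n) _)

lemma sum_fK {f : ℕ → ℝ} (hf : ∀ n, 0 ≤ f n) {σ : ℝ} (hs : Summable (wa f σ))
    {g : ℝ → ℂ} (hg : Integrable g) (y : ℝ) :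
    ∑' n, (wa f σ n : ℂ) * fK g (Real.log n - y) =
      ∫ t, g t * Complex.exp ((t * y : ℝ) * Complex.I) *
        ∑' n, (wa f σ n : ℂ) * Complex.exp (-(t * Real.log n : ℝ) * Complex.I) := by
  have h1 : ∀ n, (wa f σ n : ℂ) * fK g (Real.log n - y) =
      ∫ t, (wa f σ n : ℂ) * (g t * Complex.exp (-(t * (Real.log n - y) : ℝ) * Complex.I)) := by
    intro n; rw [integral_const_mul]; rfl
  simp_rw [h1]
  have h2 := hasSum_integral_of_summable_integral_norm (μ := volume)
    (F := fun n t => (wa f σ n : ℂ) * (g t * Complex.exp (-(t * (Real.log n - y) : ℝ) * Complex.I)))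
    (fun n => (integrable_mul_cexp hg _).const_mul _) (by
      have : ∀ n, ∫ t, ‖(wa f σ n : ℂ) *
          (g t * Complex.exp (-(t * (Real.log n - y) : ℝ) * Complex.I))‖ =
          wa f σ n * ∫ t, ‖g t‖ := by
        intro n
        simp_rw [norm_mul, norm_cexp_neg_mul_I, mul_one]
        rw [integral_const_mul, Complex.norm_real, Real.norm_of_nonneg (wa_nonneg hf σ n)]
      simp_rw [this]
      exact hs.mul_right _)
  rw [h2.tsum_eq]
  congr 1
  ext t
  rw [← tsum_mul_left]
  congr 1
  ext n
  have : Complex.exp (-(t * (Real.log n - y) : ℝ) * Complex.I) =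
    Complex.exp ((t * y : ℝ) * Complex.I) * Complex.exp (-(t * Real.log n : ℝ) * Complex.I) := by
    rw [← Complex.exp_add]; congr 1; push_cast; ring
  rw [this]; ring

lemma int_fK {g : ℝ → ℂ} (hg : Integrable g) {ε : ℝ} (hε : 0 < ε) (y : ℝ) :
    ∫ v in Set.Ioi (0:ℝ), (Real.exp (-ε * v) : ℂ) * fK g (v - y) =
      ∫ t, g t * Complex.exp ((t * y : ℝ) * Complex.I) * (1 / (ε + t * Complex.I)) := by
  have h1 : ∀ v : ℝ, (Real.exp (-ε * v) : ℂ) * fK g (v - y) =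
      ∫ t, (Real.exp (-ε * v) : ℂ) * (g t * Complex.exp (-(t * (v - y) : ℝ) * Complex.I)) := by
    intro n; rw [integral_const_mul]; rfl
  simp_rw [h1]
  rw [integral_integral_swap]
  · congr 1
    ext t
    have : ∀ v : ℝ, (Real.exp (-ε * v) : ℂ) * (g t * Complex.exp (-(t * (v - y) : ℝ) * Complex.I))
        = g t * Complex.exp ((t * y : ℝ) * Complex.I) * Complex.exp (-(ε + t * Complex.I) * v) := by
      intro v
      have : Complex.exp (-ε * v) * Complex.exp (-(t * (v - y) : ℝ) * Complex.I) =
        Complex.exp ((t * y : ℝ) * Complex.I) * Complex.exp (-(ε + t * Complex.I) * v) := by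
        rw [← Complex.exp_add, ← Complex.exp_add]; congr 1; push_cast; ring
      rw [mul_assoc, ← this]; push_cast; ring
    simp_rw [this]
    rw [integral_const_mul, integral_exp_mul_complex_Ioi (by simpa using hε)]
    rw [Complex.ofReal_zero, mul_zero, Complex.exp_zero, neg_div_neg_eq]
  · have hE : Integrable (fun v : ℝ => Real.exp (-ε * v)) (volume.restrict (Set.Ioi 0)) :=
      exp_neg_integrableOn_Ioi 0 hε
    have := (hE.ofReal (𝕜 := ℂ)).mul_prod hg
    have h2 := this.mul_bdd (c := 1)
      (g := fun z : ℝ × ℝ => Complex.exp (-(z.2 * (z.1 - y) : ℝ) * Complex.I)) (by fun_prop)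
      (Eventually.of_forall fun t => by rw [norm_cexp_neg_mul_I])
    refine h2.congr (Eventually.of_forall fun z => ?_)
    simp [Function.uncurry, mul_assoc]

/-- Hypotheses of the Wiener-Ikehara theorem. -/
structure WIHyp (f : ℕ → ℝ) (A : ℝ) (G : ℂ → ℂ) : Prop where
  nonneg : ∀ n, 0 ≤ f n
  pos : 0 < A
  summ : ∀ σ : ℝ, 1 < σ → Summable (wa f σ)
  cont : ContinuousOn G {s | 1 ≤ s.re}
  eq : ∀ σ : ℝ, 1 < σ → ∀ t : ℝ, G (σ + t * Complex.I) =
    ∑' n, (wa f σ n : ℂ) * Complex.exp (-(t * Real.log n : ℝ) * Complex.I)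
      - A * (1 / ((σ - 1 : ℝ) + t * Complex.I))

variable {f : ℕ → ℝ} {A : ℝ} {G : ℂ → ℂ}

lemma cont_line (H : WIHyp f A G) {σ : ℝ} (hσ : 1 ≤ σ) :
    Continuous fun t : ℝ => G (σ + t * Complex.I) := by
  rw [← continuousOn_univ]
  refine H.cont.comp (by fun_prop) fun t _ => ?_
  simpa using hσ

lemma integrable_gG (H : WIHyp f A G) {σ : ℝ} (hσ : 1 ≤ σ) {g : ℝ → ℂ} (hg : Continuous g)
    (hgc : HasCompactSupport g) (y : ℝ) :
    Integrable fun t : ℝ => g t * Complex.exp ((t * y : ℝ) * Complex.I) * G (σ + t * Complex.I) := by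
  have := cont_line H hσ
  apply Continuous.integrable_of_hasCompactSupport
  · exact Continuous.mul (by fun_prop) this
  · exact (hgc.mul_right).mul_right

lemma diff_fK (H : WIHyp f A G) {σ : ℝ} (hσ : 1 < σ) {g : ℝ → ℂ} (hg : Continuous g)
    (hgc : HasCompactSupport g) (y : ℝ) :
    ∑' n, (wa f σ n : ℂ) * fK g (Real.log n - y) -
      A * ∫ v in Set.Ioi (0:ℝ), (Real.exp (-(σ - 1) * v) : ℂ) * fK g (v - y) =
      ∫ t : ℝ, g t * Complex.exp ((t * y : ℝ) * Complex.I) * G (σ + t * Complex.I) := by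
  have hgi : Integrable g := hg.integrable_of_hasCompactSupport hgc
  have hε : 0 < σ - 1 := by linarith
  rw [sum_fK H.nonneg (H.summ σ hσ) hgi, int_fK hgi hε, ← integral_const_mul]
  have hne : ∀ t : ℝ, ((σ - 1 : ℝ) : ℂ) + t * Complex.I ≠ 0 := by
    intro t h
    have := congrArg Complex.re h
    simp at this
    linarith
  have hI : Integrable fun t : ℝ => (A:ℂ) * (g t * Complex.exp ((t * y : ℝ) * Complex.I) *
      (1 / ((σ - 1 : ℝ) + t * Complex.I))) := by
    apply Integrable.const_mul
    apply Continuous.integrable_of_hasCompactSupport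
    · have : Continuous fun t : ℝ => 1 / (((σ - 1 : ℝ) : ℂ) + t * Complex.I) :=
        continuous_const.div (by fun_prop) hne
      fun_prop
    · exact (hgc.mul_right).mul_right
  rw [sub_eq_iff_eq_add, ← integral_add (integrable_gG H hσ.le hg hgc y) hI]
  congr 1
  ext t
  rw [H.eq σ hσ t]
  ring

/-- The sequence `σ_j = 1 + 1/(j+1)`. -/
noncomputable def sg (j : ℕ) : ℝ := 1 + 1 / ((j : ℝ) + 1)

lemma one_lt_sg (j : ℕ) : 1 < sg j := by unfold sg; have : (0:ℝ) < 1 / ((j:ℝ) + 1) := by positivity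
                                         linarith

lemma sg_le (j : ℕ) : sg j ≤ 2 := by
  unfold sg
  have : 1 / ((j:ℝ) + 1) ≤ 1 := by
    rw [div_le_one (by positivity)]
    have : (0:ℝ) ≤ j := by positivity
    linarith
  linarith

lemma tendsto_sg : Tendsto sg atTop (𝓝 1) := by
  have := tendsto_one_div_add_atTop_nhds_zero_nat (𝕜 := ℝ)
  have h2 := this.const_add 1
  rw [add_zero] at h2
  exact h2

lemma tendsto_rhs (H : WIHyp f A G) {g : ℝ → ℂ} (hg : Continuous g)
    (hgc : HasCompactSupport g) (y : ℝ) :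
    Tendsto (fun j => ∫ t : ℝ, g t * Complex.exp ((t * y : ℝ) * Complex.I) * G (sg j + t * Complex.I))
      atTop (𝓝 (∫ t : ℝ, g t * Complex.exp ((t * y : ℝ) * Complex.I) * G ((1:ℝ) + t * Complex.I))) := by
  obtain ⟨C, hC⟩ : ∃ C, ∀ p ∈ Set.Icc (1:ℝ) 2 ×ˢ tsupport g,
      ‖G ((p.1 : ℂ) + (p.2 : ℂ) * Complex.I)‖ ≤ C := by
    apply IsCompact.exists_bound_of_continuousOn (isCompact_Icc.prod hgc)
    refine H.cont.comp (by fun_prop) ?_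
    rintro ⟨a, b⟩ ⟨h1, h2⟩
    simpa using h1.1
  refine tendsto_integral_filter_of_dominated_convergence (fun t => ‖g t‖ * C)
    (Eventually.of_forall fun j => (integrable_gG H (one_lt_sg j).le hg hgc y).aestronglyMeasurable)
    (Eventually.of_forall fun j => Eventually.of_forall fun t => ?_)
    ((hg.integrable_of_hasCompactSupport hgc).norm.mul_const C)
    (Eventually.of_forall fun t => ?_)
  · rw [norm_mul, norm_mul, Complex.norm_exp_ofReal_mul_I, mul_one]
    by_cases ht : t ∈ tsupport g
    · gcongr
      exact hC (sg j, t) ⟨⟨(one_lt_sg j).le, sg_le j⟩, ht⟩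
    · simp [image_eq_zero_of_notMem_tsupport ht]
  · refine Tendsto.const_mul _ ?_
    have h1 : Tendsto (fun j => ((sg j : ℂ) + t * Complex.I)) atTop
        (𝓝[{s | 1 ≤ s.re}] (((1:ℝ):ℂ) + t * Complex.I)) := by
      rw [tendsto_nhdsWithin_iff]
      refine ⟨((Complex.continuous_ofReal.tendsto _).comp tendsto_sg).add_const _, ?_⟩
      exact Eventually.of_forall fun j => by simpa using (one_lt_sg j).le
    exact (H.cont _ (by simp)).tendsto.comp h1

end Part2

section Part3
open Filter MeasureTheory Topology
variable {f : ℕ → ℝ} {A : ℝ} {G : ℂ → ℂ}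

lemma tendsto_wa (f : ℕ → ℝ) (n : ℕ) : Tendsto (fun j => wa f (sg j) n) atTop (𝓝 (wa f 1 n)) := by
  unfold wa
  refine Tendsto.const_mul _ ?_
  have : ContinuousAt (fun x : ℝ => (n:ℝ) ^ x) (-1) := Real.continuousAt_const_rpow' (by norm_num)
  exact this.tendsto.comp tendsto_sg.neg

lemma wa_le (hf : ∀ n, 0 ≤ f n) (j n : ℕ) : wa f (sg j) n ≤ wa f 1 n := by
  unfold wa
  rcases Nat.eq_zero_or_pos n with rfl | hn
  · have := one_lt_sg j
    rw [Nat.cast_zero, Real.zero_rpow (by linarith), Real.zero_rpow (by norm_num)]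
  · refine mul_le_mul_of_nonneg_left ?_ (hf n)
    refine Real.rpow_le_rpow_of_exponent_le (by exact_mod_cast hn) ?_
    have := one_lt_sg j
    linarith

lemma norm_fK_le (g : ℝ → ℂ) (u : ℝ) : ‖fK g u‖ ≤ ∫ t, ‖g t‖ := by
  unfold fK
  refine (norm_integral_le_integral_norm _).trans (le_of_eq ?_)
  congr 1; ext t
  rw [norm_mul, norm_cexp_neg_mul_I, mul_one]

lemma exp_neg_sg_le (j : ℕ) {v : ℝ} (hv : 0 < v) : Real.exp (-(sg j - 1) * v) ≤ 1 := by
  rw [Real.exp_le_one_iff]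
  have := one_lt_sg j
  nlinarith

lemma summ_k0 (H : WIHyp f A G) {g : ℝ → ℂ} (hg : Continuous g) (hgc : HasCompactSupport g)
    {k : ℝ → ℝ} (hk : ∀ u, fK g u = k u) (hk0 : ∀ u, 0 ≤ k u) (hki : Integrable k) (y : ℝ) :
    Summable fun n : ℕ => wa f 1 n * k (Real.log n - y) := by
  have hkb : ∀ u, k u ≤ ∫ t, ‖g t‖ := by
    intro u
    have := norm_fK_le g u
    rw [hk, Complex.norm_real, Real.norm_of_nonneg (hk0 u)] at this
    exact this
  obtain ⟨B, hB⟩ := (tendsto_rhs H hg hgc y).norm.bddAbove_range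
  have hki' : Integrable fun v => k (v - y) := hki.comp_sub_right y
  have bound : ∀ j (s : Finset ℕ), ∑ n ∈ s, wa f (sg j) n * k (Real.log n - y) ≤
      B + A * ∫ v in Set.Ioi (0:ℝ), k (v - y) := by
    intro j s
    have hsum : Summable fun n : ℕ => wa f (sg j) n * k (Real.log n - y) :=
      Summable.of_nonneg_of_le (fun n => mul_nonneg (wa_nonneg H.nonneg _ _) (hk0 _))
        (fun n => mul_le_mul_of_nonneg_left (hkb _) (wa_nonneg H.nonneg _ _))
        ((H.summ _ (one_lt_sg j)).mul_right _)
    refine (hsum.sum_le_tsum s (fun n _ => mul_nonneg (wa_nonneg H.nonneg _ _) (hk0 _))).trans ?_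
    have h1 := diff_fK H (one_lt_sg j) hg hgc y
    rw [sub_eq_iff_eq_add] at h1
    simp_rw [hk] at h1
    have h2 : ((∑' n : ℕ, wa f (sg j) n * k (Real.log n - y) : ℝ) : ℂ) =
      ∑' n : ℕ, (wa f (sg j) n : ℂ) * (k (Real.log n - y) : ℂ) := by
      push_cast; rfl
    have h3 : ∑' n : ℕ, wa f (sg j) n * k (Real.log n - y) =
        ‖∑' n : ℕ, (wa f (sg j) n : ℂ) * (k (Real.log n - y) : ℂ)‖ := by
      rw [← h2, Complex.norm_real, Real.norm_of_nonneg]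
      exact tsum_nonneg (fun n => mul_nonneg (wa_nonneg H.nonneg _ _) (hk0 _))
    rw [h3, h1]
    refine (norm_add_le _ _).trans (add_le_add (hB ⟨j, rfl⟩) ?_)
    rw [norm_mul, Complex.norm_real, Real.norm_of_nonneg H.pos.le]
    refine mul_le_mul_of_nonneg_left ?_ H.pos.le
    refine norm_integral_le_of_norm_le hki'.integrableOn ?_
    refine (ae_restrict_iff' measurableSet_Ioi).2 (Eventually.of_forall fun v hv => ?_)
    rw [norm_mul, Complex.norm_real, Complex.norm_real, Real.norm_of_nonneg (hk0 _),
      Real.norm_of_nonneg (Real.exp_pos _).le]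
    exact mul_le_of_le_one_left (hk0 _) (exp_neg_sg_le j hv)
  refine summable_of_sum_le (c := B + A * ∫ v in Set.Ioi (0:ℝ), k (v - y))
    (fun n => mul_nonneg (wa_nonneg H.nonneg _ _) (hk0 _)) (fun s => ?_)
  refine le_of_tendsto' (tendsto_finsetSum s fun n _ => (tendsto_wa f n).mul_const _)
    (fun j => bound j s)

lemma limit_eq (H : WIHyp f A G) {g : ℝ → ℂ} (hg : Continuous g) (hgc : HasCompactSupport g)
    {k : ℝ → ℝ} (hk : ∀ u, ‖fK g u‖ ≤ k u) (hki : Integrable k) (y : ℝ)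
    (hs : Summable fun n : ℕ => wa f 1 n * k (Real.log n - y)) :
    ∑' n, (wa f 1 n : ℂ) * fK g (Real.log n - y) - A * ∫ v in Set.Ioi (0:ℝ), fK g (v - y) =
      ∫ t : ℝ, g t * Complex.exp ((t * y : ℝ) * Complex.I) * G ((1:ℝ) + t * Complex.I) := by
  have hgi : Integrable g := hg.integrable_of_hasCompactSupport hgc
  have hki' : Integrable fun v => k (v - y) := hki.comp_sub_right y
  have hc := continuous_fK hgi
  refine tendsto_nhds_unique (Tendsto.sub ?_ (Tendsto.const_mul _ ?_))
    ((tendsto_rhs H hg hgc y).congr fun j => (diff_fK H (one_lt_sg j) hg hgc y).symm)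
  · refine tendsto_tsum_of_dominated_convergence hs
      (fun n => ((Complex.continuous_ofReal.tendsto _).comp (tendsto_wa f n)).mul_const _)
      (Eventually.of_forall fun j n => ?_)
    rw [norm_mul, Complex.norm_real, Real.norm_of_nonneg (wa_nonneg H.nonneg _ _)]
    exact mul_le_mul (wa_le H.nonneg j n) (hk _) (norm_nonneg _) (wa_nonneg H.nonneg _ _)
  · refine tendsto_integral_filter_of_dominated_convergence (fun v => k (v - y))
      (Eventually.of_forall fun j => by fun_prop)
      (Eventually.of_forall fun j => ?_) hki'.integrableOn (Eventually.of_forall fun v => ?_)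
    · refine (ae_restrict_iff' measurableSet_Ioi).2 (Eventually.of_forall fun v hv => ?_)
      rw [norm_mul, Complex.norm_real, Real.norm_of_nonneg (Real.exp_pos _).le]
      exact (mul_le_of_le_one_left (norm_nonneg _) (exp_neg_sg_le j hv)).trans (hk _)
    · have h1 : Tendsto (fun j => Real.exp (-(sg j - 1) * v)) atTop (𝓝 (Real.exp (-(1 - 1) * v))) :=
        (Real.continuous_exp.tendsto _).comp (((tendsto_sg.sub_const 1).neg).mul_const v)
      have h2 := ((Complex.continuous_ofReal.tendsto _).comp h1).mul_const (fK g (v - y))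
      simpa using h2

lemma limit_y (H : WIHyp f A G) {g : ℝ → ℂ} (hg : Continuous g) (hgc : HasCompactSupport g)
    {k : ℝ → ℝ} (hk : ∀ u, ‖fK g u‖ ≤ k u) (hki : Integrable k)
    (hs : ∀ y, Summable fun n : ℕ => wa f 1 n * k (Real.log n - y)) :
    Tendsto (fun y : ℝ => ∑' n, (wa f 1 n : ℂ) * fK g (Real.log n - y)) atTop
      (𝓝 (A * ∫ u, fK g u)) := by
  have hgi : Integrable g := hg.integrable_of_hasCompactSupport hgc
  have hc := continuous_fK hgi
  have hfi : Integrable (fK g) := hki.mono' hc.aestronglyMeasurable (Eventually.of_forall hk)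
  have e : ∀ y : ℝ, ∑' n, (wa f 1 n : ℂ) * fK g (Real.log n - y) =
      (A * ∫ v in Set.Ioi (-y), fK g v) +
      ∫ t : ℝ, g t * Complex.exp ((t * y : ℝ) * Complex.I) * G ((1:ℝ) + t * Complex.I) := by
    intro y
    rw [← limit_eq H hg hgc hk hki y (hs y)]
    have : ∫ v in Set.Ioi (0:ℝ), fK g (v - y) = ∫ v in Set.Ioi (-y), fK g v := by
      rw [← integral_indicator measurableSet_Ioi, ← integral_indicator measurableSet_Ioi,
        ← integral_sub_right_eq_self ((Set.Ioi (-y)).indicator (fK g)) y]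
      congr 1; ext v
      simp [Set.indicator_apply]
    rw [this]; ring
  simp_rw [e]
  rw [show (A : ℂ) * ∫ u, fK g u = (A * ∫ u, fK g u) + 0 by ring]
  refine Tendsto.add (Tendsto.const_mul _ ?_) ?_
  · have hI : ∀ y : ℝ, ∫ v in Set.Ioi (-y), fK g v = ∫ v, (Set.Ioi (-y)).indicator (fK g) v :=
      fun y => (integral_indicator measurableSet_Ioi).symm
    simp_rw [hI]
    refine tendsto_integral_filter_of_dominated_convergence (fun v => ‖fK g v‖)
      (Eventually.of_forall fun y => hc.aestronglyMeasurable.indicator measurableSet_Ioi)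
      (Eventually.of_forall fun y => Eventually.of_forall fun v => norm_indicator_le_norm_self _ _)
      hfi.norm (Eventually.of_forall fun v => ?_)
    refine tendsto_const_nhds.congr' ?_
    filter_upwards [eventually_gt_atTop (-v)] with y hy
    rw [Set.indicator_of_mem (by simpa using by linarith)]
  · have h1 := (Real.tendsto_integral_exp_smul_cocompact
      (fun t : ℝ => g t * G ((1:ℝ) + t * Complex.I)))
    have h2 : Tendsto (fun y : ℝ => -(y / (2 * Real.pi))) atTop (cocompact ℝ) := by
      refine Tendsto.mono_right ?_ atBot_le_cocompact
      refine tendsto_neg_atTop_atBot.comp (tendsto_id.atTop_div_const (by positivity))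
    refine (h1.comp h2).congr fun y => ?_
    simp only [Function.comp]
    congr 1
    ext t
    rw [Circle.smul_def, Real.fourierChar_apply, smul_eq_mul]
    have : ((2 * Real.pi * -(t * -(y / (2 * Real.pi))) : ℝ) : ℂ) = ((t * y : ℝ) : ℂ) := by
      congr 1
      field_simp
    rw [this]; ring

end Part3

section Part4
open Filter MeasureTheory Topology

/-- tent function -/
noncomputable def tent (t : ℝ) : ℝ := max 0 (1 - |t|)

lemma continuous_tent : Continuous tent := by unfold tent; fun_prop

lemma tent_eq_zero {t : ℝ} (ht : 1 ≤ |t|) : tent t = 0 := by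
  unfold tent; exact max_eq_left (by linarith)

lemma hcs_tent : HasCompactSupport tent := by
  refine HasCompactSupport.intro (K := Set.Icc (-1) 1) isCompact_Icc fun t ht => tent_eq_zero ?_
  by_contra h
  rw [not_le, abs_lt] at h
  exact ht ⟨h.1.le, h.2.le⟩

/-- Fejer kernel -/
noncomputable def fej (u : ℝ) : ℝ := ∫ t, tent t * Real.cos (t * u)

lemma integrable_tent_cos (u : ℝ) : Integrable fun t => tent t * Real.cos (t * u) :=
  ((continuous_tent.mul (by fun_prop)).integrable_of_hasCompactSupport hcs_tent.mul_right)

lemma fej_eq_interval (u : ℝ) : fej u = 2 * ∫ t in (0:ℝ)..1, (1 - t) * Real.cos (t * u) := by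
  have h1 : fej u = ∫ t in (-1:ℝ)..1, tent t * Real.cos (t * u) := by
    unfold fej
    rw [intervalIntegral.integral_of_le (by norm_num), ← integral_indicator measurableSet_Ioc]
    congr 1; ext t
    by_cases ht : t ∈ Set.Ioc (-1:ℝ) 1
    · rw [Set.indicator_of_mem ht]
    · rw [Set.indicator_of_notMem ht, tent_eq_zero, zero_mul]
      by_contra h
      rw [not_le, abs_lt] at h
      exact ht ⟨h.1, h.2.le⟩
  have hc : Continuous fun t => tent t * Real.cos (t * u) := continuous_tent.mul (by fun_prop)
  have h2 : ∫ t in (-1:ℝ)..0, tent t * Real.cos (t * u) =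
      ∫ t in (0:ℝ)..1, tent t * Real.cos (t * u) := by
    have := intervalIntegral.integral_comp_neg (a := 0) (b := 1)
      (fun t => tent t * Real.cos (t * u))
    rw [neg_zero] at this
    rw [← this]
    congr 1; ext t
    simp [tent]
  have h3 : ∫ t in (0:ℝ)..1, tent t * Real.cos (t * u) =
      ∫ t in (0:ℝ)..1, (1 - t) * Real.cos (t * u) := by
    refine intervalIntegral.integral_congr fun t ht => ?_
    rw [Set.uIcc_of_le (by norm_num)] at ht
    simp only [tent, abs_of_nonneg ht.1]
    rw [max_eq_right (by linarith [ht.2])]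
  rw [h1, ← intervalIntegral.integral_add_adjacent_intervals (b := 0)
    (hc.intervalIntegrable _ _) (hc.intervalIntegrable _ _), h2, h3]
  ring

lemma fej_zero : fej 0 = 1 := by
  rw [fej_eq_interval]
  simp only [mul_zero, Real.cos_zero, mul_one]
  rw [intervalIntegral.integral_sub (by simp) (by simp), integral_id]
  simp
  norm_num

lemma fej_eq {u : ℝ} (hu : u ≠ 0) : fej u = 2 * (1 - Real.cos u) / u ^ 2 := by
  rw [fej_eq_interval]
  have : ∫ t in (0:ℝ)..1, (1 - t) * Real.cos (t * u) =
      ((1 - 1) * Real.sin (1 * u) / u - Real.cos (1 * u) / u ^ 2) -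
      ((1 - 0) * Real.sin (0 * u) / u - Real.cos (0 * u) / u ^ 2) := by
    refine intervalIntegral.integral_eq_sub_of_hasDerivAt
      (f := fun t => (1 - t) * Real.sin (t * u) / u - Real.cos (t * u) / u ^ 2)
      (fun t _ => ?_) (by apply Continuous.intervalIntegrable; fun_prop)
    have h1 : HasDerivAt (fun t : ℝ => t * u) u t := by simpa using (hasDerivAt_id t).mul_const u
    have h2 : HasDerivAt (fun t : ℝ => 1 - t) (-1) t := by simpa using (hasDerivAt_id t).const_sub 1
    convert! ((h2.mul h1.sin).div_const u).sub (h1.cos.div_const (u ^ 2)) using 1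
    field_simp
    ring
  rw [this]
  simp
  field_simp
  ring

lemma fej_nonneg (u : ℝ) : 0 ≤ fej u := by
  rcases eq_or_ne u 0 with rfl | hu
  · rw [fej_zero]; norm_num
  · rw [fej_eq hu]
    have := Real.cos_le_one u
    have : 0 ≤ 1 - Real.cos u := by linarith
    positivity

lemma fej_le_one (u : ℝ) : fej u ≤ 1 := by
  rw [← fej_zero]
  unfold fej
  refine integral_mono (integrable_tent_cos u) (integrable_tent_cos 0) fun t => ?_
  refine mul_le_mul_of_nonneg_left ?_ (le_max_left _ _)
  simpa using Real.cos_le_one _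

lemma fej_le (u : ℝ) : fej u ≤ 5 * (1 + u ^ 2)⁻¹ := by
  rw [← div_eq_mul_inv, le_div_iff₀ (by positivity)]
  have h1 := fej_le_one u
  have h2 : fej u * u ^ 2 ≤ 4 := by
    rcases eq_or_ne u 0 with rfl | hu
    · simp
    · rw [fej_eq hu, div_mul_cancel₀ _ (by positivity)]
      linarith [Real.neg_one_le_cos u]
  nlinarith

lemma fK_tent (u : ℝ) : fK (fun t => (tent t : ℂ)) u = fej u := by
  have hI : Integrable fun t => (tent t : ℂ) :=
    (Complex.continuous_ofReal.comp continuous_tent).integrable_of_hasCompactSupport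
      (hcs_tent.comp_left (g := fun x : ℝ => (x : ℂ)) Complex.ofReal_zero)
  have h1 := integrable_mul_cexp hI u
  have h2 : fK (fun t => (tent t : ℂ)) u =
    ∫ t, (tent t : ℂ) * Complex.exp ((t * u : ℝ) * Complex.I) := by
    unfold fK
    rw [← integral_neg_eq_self]
    congr 1; ext t
    simp [tent]
  have h3 : Integrable fun t : ℝ => (tent t : ℂ) * Complex.exp ((t * u : ℝ) * Complex.I) := by
    have := integrable_mul_cexp hI (-u)
    refine this.congr (Eventually.of_forall fun t => ?_)
    simp
  have h4 : 2 * fK (fun t => (tent t : ℂ)) u = 2 * (fej u : ℂ) := by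
    conv_lhs => rw [two_mul]; enter [1]; rw [h2]
    unfold fK fej
    rw [← integral_add h3 h1, ← integral_complex_ofReal, ← integral_const_mul]
    congr 1; ext t
    push_cast
    rw [Complex.cos]
    ring
  exact mul_left_cancel₀ two_ne_zero h4

lemma continuous_fej : Continuous fej := by
  have hI : Integrable fun t => (tent t : ℂ) :=
    (Complex.continuous_ofReal.comp continuous_tent).integrable_of_hasCompactSupport
      (hcs_tent.comp_left (g := fun x : ℝ => (x : ℂ)) Complex.ofReal_zero)
  have := Complex.continuous_re.comp (continuous_fK hI)
  convert! this using 1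
  ext u
  simp [fK_tent]

lemma integrable_fej : Integrable fej := by
  refine (integrable_inv_one_add_sq.const_mul 5).mono' continuous_fej.aestronglyMeasurable
    (Eventually.of_forall fun u => ?_)
  rw [Real.norm_of_nonneg (fej_nonneg u)]
  exact fej_le u

/-- the kernel -/
noncomputable def k0 (u : ℝ) : ℝ := fej u + fej (u - Real.pi)

noncomputable def g0 (t : ℝ) : ℂ := tent t * (1 + Complex.exp ((t * Real.pi : ℝ) * Complex.I))

lemma continuous_g0 : Continuous g0 := by
  unfold g0
  exact (Complex.continuous_ofReal.comp continuous_tent).mul (by fun_prop)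

lemma hcs_g0 : HasCompactSupport g0 :=
  HasCompactSupport.mul_right (hcs_tent.comp_left (g := fun x : ℝ => (x : ℂ)) Complex.ofReal_zero)

lemma fK_g0 (u : ℝ) : fK g0 u = k0 u := by
  have hI : Integrable fun t => (tent t : ℂ) :=
    (Complex.continuous_ofReal.comp continuous_tent).integrable_of_hasCompactSupport
      (hcs_tent.comp_left (g := fun x : ℝ => (x : ℂ)) Complex.ofReal_zero)
  unfold k0
  push_cast
  rw [← fK_tent, ← fK_tent]
  unfold fK
  rw [← integral_add (integrable_mul_cexp hI u) (integrable_mul_cexp hI _)]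
  congr 1; ext t
  have : Complex.exp (-(t * (u - Real.pi) : ℝ) * Complex.I) =
    Complex.exp ((t * Real.pi : ℝ) * Complex.I) * Complex.exp (-(t * u : ℝ) * Complex.I) := by
    rw [← Complex.exp_add]; congr 1; push_cast; ring
  rw [this, g0]; ring

lemma continuous_k0 : Continuous k0 := by
  have := continuous_fej
  unfold k0; fun_prop

lemma integrable_k0 : Integrable k0 := integrable_fej.add (integrable_fej.comp_sub_right _)

lemma k0_lower (u : ℝ) : 1 / (|u| + 4) ^ 2 ≤ k0 u := by
  have hpi := Real.pi_pos
  have hpi4 := Real.pi_le_four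
  unfold k0
  have ha := abs_nonneg u
  by_cases h0 : u = 0
  · have := fej_nonneg (u - Real.pi)
    rw [h0, fej_zero] at *
    norm_num
    rw [zero_sub] at this
    linarith
  by_cases h1 : u - Real.pi = 0
  · have := fej_nonneg u
    rw [h1, fej_zero]
    have : 1 / (|u| + 4) ^ 2 ≤ 1 := by
      rw [div_le_one (by positivity)]; nlinarith
    linarith
  rw [fej_eq h0, fej_eq h1, Real.cos_sub_pi]
  have c1 : 0 ≤ 1 - Real.cos u := by linarith [Real.cos_le_one u]
  have c2 : 0 ≤ 1 + Real.cos u := by linarith [Real.neg_one_le_cos u]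
  have e1 : u ^ 2 ≤ (|u| + 4) ^ 2 := by rw [← sq_abs u]; nlinarith
  have e2 : (u - Real.pi) ^ 2 ≤ (|u| + 4) ^ 2 := by
    rw [← sq_abs (u - Real.pi)]
    have := abs_sub u Real.pi
    rw [abs_of_pos hpi] at this
    gcongr
    linarith
  have f1 : 2 * (1 - Real.cos u) / (|u| + 4) ^ 2 ≤ 2 * (1 - Real.cos u) / u ^ 2 := by
    gcongr
    
  have f2 : 2 * (1 + Real.cos u) / (|u| + 4) ^ 2 ≤ 2 * (1 - -Real.cos u) / (u - Real.pi) ^ 2 := by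
    rw [sub_neg_eq_add]
    gcongr
  refine le_trans ?_ (add_le_add f1 f2)
  rw [← add_div]
  gcongr
  linarith

lemma k0_pos (u : ℝ) : 0 < k0 u := lt_of_lt_of_le (by positivity) (k0_lower u)

lemma integral_k0_pos : 0 < ∫ u, k0 u := by
  rw [integral_pos_iff_support_of_nonneg (fun u => (k0_pos u).le) integrable_k0]
  have : Function.support k0 = Set.univ := by
    ext u; simp [(k0_pos u).ne']
  rw [this]; simp

end Part4

section Part5
open Filter MeasureTheory Topology
variable {f : ℕ → ℝ} {A : ℝ} {G : ℂ → ℂ}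

lemma summ_k0' (H : WIHyp f A G) (y : ℝ) : Summable fun n : ℕ => wa f 1 n * k0 (Real.log n - y) :=
  summ_k0 H continuous_g0 hcs_g0 fK_g0 (fun u => (k0_pos u).le) integrable_k0 y

lemma fK_shift (τ u : ℝ) : fK (fun t => g0 (t + τ)) u = k0 u * Complex.exp (τ * u * Complex.I) := by
  rw [← fK_g0]
  unfold fK
  rw [← integral_add_right_eq_self (fun t => g0 t * Complex.exp (-(t * u : ℝ) * Complex.I)) τ,
    ← integral_mul_const]
  congr 1; ext t
  rw [mul_assoc, ← Complex.exp_add]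
  congr 2
  push_cast; ring

lemma charFun_lim (H : WIHyp f A G) (τ : ℝ) :
    Tendsto (fun N : ℕ => ∑' n : ℕ, ((wa f 1 n * k0 (Real.log n - Real.log N) : ℝ) : ℂ) *
      Complex.exp (τ * (Real.log n - Real.log N : ℝ) * Complex.I)) atTop
      (𝓝 (A * ∫ u, (k0 u : ℂ) * Complex.exp (τ * u * Complex.I))) := by
  have h1 := limit_y H (g := fun t => g0 (t + τ)) (continuous_g0.comp (by fun_prop))
    (hcs_g0.comp_homeomorph (Homeomorph.addRight τ)) (k := k0) (fun u => by
      rw [fK_shift, norm_mul, ← Complex.ofReal_mul, Complex.norm_exp_ofReal_mul_I, mul_one,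
        Complex.norm_real, Real.norm_of_nonneg (k0_pos u).le]) integrable_k0 (summ_k0' H)
  simp_rw [fK_shift] at h1
  refine (h1.comp (Real.tendsto_log_atTop.comp tendsto_natCast_atTop_atTop)).congr fun N => ?_
  simp only [Function.comp]
  congr 1; ext n
  push_cast; ring

lemma weak_lim (H : WIHyp f A G) (h : BoundedContinuousFunction ℝ ℝ) :
    Tendsto (fun N : ℕ => ∑' n : ℕ, wa f 1 n * k0 (Real.log n - Real.log N) *
      h (Real.log n - Real.log N)) atTop (𝓝 (A * ∫ u, k0 u * h u)) :=
  levy_weights (fun N n => wa f 1 n * k0 (Real.log n - Real.log N))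
    (fun N n => Real.log n - Real.log N)
    (fun N n => mul_nonneg (wa_nonneg H.nonneg _ _) (k0_pos _).le)
    (fun N => summ_k0' H _) k0 (fun u => (k0_pos u).le) continuous_k0 integrable_k0 A H.pos
    integral_k0_pos (charFun_lim H) h

/-- ramp: 1 for u ≤ a, 0 for u ≥ b -/
noncomputable def ramp (a b u : ℝ) : ℝ := max 0 (min 1 ((b - u) / (b - a)))

lemma ramp_nonneg (a b u : ℝ) : 0 ≤ ramp a b u := le_max_left _ _
lemma ramp_le_one (a b u : ℝ) : ramp a b u ≤ 1 := max_le zero_le_one (min_le_left _ _)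
lemma ramp_eq_one {a b u : ℝ} (hab : a < b) (hu : u ≤ a) : ramp a b u = 1 := by
  unfold ramp
  have : 1 ≤ (b - u) / (b - a) := by rw [le_div_iff₀ (by linarith)]; linarith
  rw [min_eq_left this]; norm_num
lemma ramp_eq_zero {a b u : ℝ} (hab : a < b) (hu : b ≤ u) : ramp a b u = 0 := by
  unfold ramp
  have : (b - u) / (b - a) ≤ 0 := div_nonpos_of_nonpos_of_nonneg (by linarith) (by linarith)
  exact max_eq_left ((min_le_right _ _).trans this)
lemma continuous_ramp (a b : ℝ) : Continuous (ramp a b) := by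
  unfold ramp; fun_prop

lemma exp_div_k0_le {u : ℝ} (hu : u ≤ 1) : Real.exp u / k0 u ≤ 100 := by
  rw [div_le_iff₀ (k0_pos u)]
  have h1 := k0_lower u
  have h2 : Real.exp u * (|u| + 4) ^ 2 ≤ 100 := by
    rcases le_total 0 u with h | h
    · rw [abs_of_nonneg h]
      have : Real.exp u ≤ 3 := (Real.exp_le_exp.2 hu).trans (by linarith [Real.exp_one_lt_three])
      have h3 : (u + 4) ^ 2 ≤ 25 := by nlinarith
      nlinarith [Real.exp_pos u]
    · rw [abs_of_nonpos h]
      have h3 := Real.quadratic_le_exp_of_nonneg (x := -u) (by linarith)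
      have h4 : Real.exp u * Real.exp (-u) = 1 := by rw [← Real.exp_add]; simp
      have h5 : (-u + 4) ^ 2 ≤ 100 * Real.exp (-u) := by nlinarith
      nlinarith [Real.exp_pos u]
  have h6 : Real.exp u ≤ 100 * (1 / (|u| + 4) ^ 2) := by
    rw [mul_one_div, le_div_iff₀ (by positivity)]; exact h2
  linarith

/-- the test function -/
noncomputable def tf (a b : ℝ) (hab : a < b) (hb : b ≤ 1) : BoundedContinuousFunction ℝ ℝ :=
  BoundedContinuousFunction.ofNormedAddCommGroup (fun u => Real.exp u * ramp a b u / k0 u)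
    ((Real.continuous_exp.mul (continuous_ramp a b)).div continuous_k0 fun u => (k0_pos u).ne') 100
    (by
      intro u
      rw [Real.norm_of_nonneg (div_nonneg (mul_nonneg (Real.exp_pos u).le (ramp_nonneg _ _ _))
        (k0_pos u).le)]
      rcases le_total u 1 with h | h
      · refine le_trans ?_ (exp_div_k0_le h)
        refine div_le_div_of_nonneg_right ?_ (k0_pos u).le
        exact mul_le_of_le_one_right (Real.exp_pos u).le (ramp_le_one _ _ _)
      · rw [ramp_eq_zero hab (hb.trans h)]; norm_num)

lemma tf_apply (a b : ℝ) (hab : a < b) (hb : b ≤ 1) (u : ℝ) :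
    k0 u * tf a b hab hb u = Real.exp u * ramp a b u := by
  change k0 u * (Real.exp u * ramp a b u / k0 u) = _
  rw [mul_div_cancel₀ _ (k0_pos u).ne']

lemma ramp_integral {a b : ℝ} (hab : a < b) :
    Real.exp a ≤ ∫ u, Real.exp u * ramp a b u ∧ ∫ u, Real.exp u * ramp a b u ≤ Real.exp b := by
  have hI : Integrable fun u => Real.exp u * ramp a b u := by
    have h1 : Integrable ((Set.Iic b).indicator Real.exp) :=
      (integrable_indicator_iff measurableSet_Iic).2 (integrableOn_exp_Iic b)
    refine h1.mono' ((Real.continuous_exp.mul (continuous_ramp a b)).aestronglyMeasurable)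
      (Eventually.of_forall fun u => ?_)
    rw [Real.norm_of_nonneg (mul_nonneg (Real.exp_pos u).le (ramp_nonneg _ _ _))]
    by_cases hu : u ≤ b
    · rw [Set.indicator_of_mem (by exact hu)]
      exact mul_le_of_le_one_right (Real.exp_pos u).le (ramp_le_one _ _ _)
    · rw [Set.indicator_of_notMem (by exact hu), ramp_eq_zero hab (by linarith), mul_zero]
  constructor
  · rw [← integral_exp_Iic a, ← integral_indicator measurableSet_Iic]
    refine integral_mono ((integrable_indicator_iff measurableSet_Iic).2 (integrableOn_exp_Iic a))
      hI fun u => ?_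
    by_cases hu : u ≤ a
    · rw [Set.indicator_of_mem (by exact hu)]; simp [ramp_eq_one hab hu]
    · rw [Set.indicator_of_notMem (by exact hu)]
      exact mul_nonneg (Real.exp_pos u).le (ramp_nonneg _ _ _)
  · rw [← integral_exp_Iic b, ← integral_indicator measurableSet_Iic]
    refine integral_mono hI
      ((integrable_indicator_iff measurableSet_Iic).2 (integrableOn_exp_Iic b)) fun u => ?_
    by_cases hu : u ≤ b
    · rw [Set.indicator_of_mem (by exact hu)]
      exact mul_le_of_le_one_right (Real.exp_pos u).le (ramp_le_one _ _ _)
    · rw [Set.indicator_of_notMem (by exact hu)]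
      simp [ramp_eq_zero hab (not_le.1 hu).le]

lemma summand_eq {a b : ℝ} (hab : a < b) (hb : b ≤ 1) (f0 : f 0 = 0) {N : ℕ} (hN : 0 < N) (n : ℕ) :
    wa f 1 n * k0 (Real.log n - Real.log N) * tf a b hab hb (Real.log n - Real.log N) =
      f n * ramp a b (Real.log n - Real.log N) / N := by
  rw [mul_assoc, tf_apply]
  rcases Nat.eq_zero_or_pos n with rfl | hn
  · simp [wa, f0]
  · have h1 : (0:ℝ) < n := by exact_mod_cast hn
    have h2 : (0:ℝ) < N := by exact_mod_cast hN
    rw [Real.exp_sub, Real.exp_log h1, Real.exp_log h2, wa, Real.rpow_neg_one]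
    field_simp

theorem wiener_ikehara (H : WIHyp f A G) (f0 : f 0 = 0) :
    Tendsto (fun N : ℕ => (∑ n ∈ Finset.range (N + 1), f n) / N) atTop (𝓝 A) := by
  have hsummable : ∀ (a b : ℝ) (hab : a < b) (hb : b ≤ 1) (N : ℕ), 0 < N →
      Summable fun n : ℕ => f n * ramp a b (Real.log n - Real.log N) / N := by
    intro a b hab hb N hN
    simp_rw [← summand_eq hab hb f0 hN]
    refine Summable.of_norm_bounded ((summ_k0' H (Real.log N)).mul_right ‖tf a b hab hb‖) fun n => ?_
    rw [norm_mul, Real.norm_of_nonneg (mul_nonneg (wa_nonneg H.nonneg _ _) (k0_pos _).le)]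
    exact mul_le_mul_of_nonneg_left (BoundedContinuousFunction.norm_coe_le_norm _ _)
      (mul_nonneg (wa_nonneg H.nonneg _ _) (k0_pos _).le)
  have hlim : ∀ (a b : ℝ) (hab : a < b) (hb : b ≤ 1),
      Tendsto (fun N : ℕ => ∑' n : ℕ, f n * ramp a b (Real.log n - Real.log N) / N) atTop
        (𝓝 (A * ∫ u, Real.exp u * ramp a b u)) := by
    intro a b hab hb
    have := weak_lim H (tf a b hab hb)
    simp_rw [tf_apply] at this
    refine this.congr' ?_
    filter_upwards [eventually_gt_atTop 0] with N hN
    simp_rw [summand_eq hab hb f0 hN]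
  have hlow : ∀ δ : ℝ, 0 < δ → δ ≤ 1 → ∀ N : ℕ, 0 < N →
      ∑' n : ℕ, f n * ramp (-δ) 0 (Real.log n - Real.log N) / N ≤
        (∑ n ∈ Finset.range (N + 1), f n) / N := by
    intro δ hδ hδ1 N hN
    rw [tsum_eq_sum (s := Finset.range (N + 1)), Finset.sum_div]
    · refine Finset.sum_le_sum fun n _ => ?_
      exact div_le_div_of_nonneg_right (mul_le_of_le_one_right (H.nonneg n) (ramp_le_one _ _ _))
        (Nat.cast_nonneg N)
    · intro n hn
      rw [Finset.mem_range, not_lt] at hn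
      rw [ramp_eq_zero (by linarith), mul_zero, zero_div]
      rw [sub_nonneg]
      exact Real.log_le_log (by exact_mod_cast hN) (by exact_mod_cast (by omega))
  have hup : ∀ δ : ℝ, 0 < δ → δ ≤ 1 → ∀ N : ℕ, 0 < N →
      (∑ n ∈ Finset.range (N + 1), f n) / N ≤
      ∑' n : ℕ, f n * ramp 0 δ (Real.log n - Real.log N) / N := by
    intro δ hδ hδ1 N hN
    have h1 : (∑ n ∈ Finset.range (N + 1), f n) / N =
      ∑ n ∈ Finset.range (N + 1), f n * ramp 0 δ (Real.log n - Real.log N) / N := by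
      rw [Finset.sum_div]
      refine Finset.sum_congr rfl fun n hn => ?_
      rcases Nat.eq_zero_or_pos n with rfl | hn0
      · simp [f0]
      rw [Finset.mem_range] at hn
      rw [ramp_eq_one hδ, mul_one]
      rw [sub_nonpos]
      exact Real.log_le_log (by exact_mod_cast hn0) (by exact_mod_cast (by omega))
    rw [h1]
    exact (hsummable 0 δ hδ hδ1 N hN).sum_le_tsum _ fun n _ =>
      div_nonneg (mul_nonneg (H.nonneg n) (ramp_nonneg _ _ _)) (Nat.cast_nonneg N)
  have hexp : ∀ s : ℝ, Tendsto (fun δ : ℝ => A * Real.exp (s * δ)) (𝓝[>] 0) (𝓝 A) := by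
    intro s
    have : Tendsto (fun δ : ℝ => A * Real.exp (s * δ)) (𝓝 0) (𝓝 (A * Real.exp (s * 0))) :=
      (by fun_prop : Continuous fun δ : ℝ => A * Real.exp (s * δ)).tendsto 0
    simp only [mul_zero, Real.exp_zero, mul_one] at this
    exact this.mono_left nhdsWithin_le_nhds
  have hsmall : ∀ᶠ δ : ℝ in 𝓝[>] 0, 0 < δ ∧ δ ≤ 1 := by
    filter_upwards [Ioc_mem_nhdsGT (zero_lt_one (α := ℝ))] with δ hδ using ⟨hδ.1, hδ.2⟩
  rw [tendsto_order]
  constructor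
  · intro B hB
    obtain ⟨δ, h1, h2, h3⟩ := (((hexp (-1)).eventually_const_lt hB).and hsmall).exists
    have h4 := (hlim (-δ) 0 (by linarith) zero_le_one).eventually_const_lt (u := B) (by
      refine h1.trans_le (mul_le_mul_of_nonneg_left ?_ H.pos.le)
      have := (ramp_integral (a := -δ) (b := 0) (by linarith)).1
      rwa [neg_one_mul])
    filter_upwards [h4, eventually_gt_atTop 0] with N h5 hN
    exact h5.trans_le (hlow δ h2 h3 N hN)
  · intro B hB
    obtain ⟨δ, h1, h2, h3⟩ := (((hexp 1).eventually_lt_const hB).and hsmall).exists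
    have h4 := (hlim 0 δ h2 h3).eventually_lt_const (u := B) (by
      refine lt_of_le_of_lt (mul_le_mul_of_nonneg_left ?_ H.pos.le) h1
      have := (ramp_integral (a := 0) (b := δ) h2).2
      rwa [one_mul])
    filter_upwards [h4, eventually_gt_atTop 0] with N h5 hN
    exact (hup δ h2 h3 N hN).trans_lt h5

end Part5

section Part6
open Filter MeasureTheory Topology
open ArithmeticFunction.vonMangoldt in
lemma wiHyp_residue (m : ℕ) [NeZero m] :
    WIHyp (residueClass (1 : ZMod m)) ((m.totient : ℝ)⁻¹) (LFunctionResidueClassAux (1 : ZMod m)) := by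
  have hterm : ∀ σ : ℝ, 1 < σ → ∀ t : ℝ, ∀ n : ℕ,
      LSeries.term (fun n => ((residueClass (1 : ZMod m) n : ℝ) : ℂ)) (σ + t * Complex.I) n =
      (wa (residueClass (1 : ZMod m)) σ n : ℂ) *
        Complex.exp (-(t * Real.log n : ℝ) * Complex.I) := by
    intro σ hσ t n
    rcases Nat.eq_zero_or_pos n with rfl | hn
    · rw [LSeries.term_zero, wa, residueClass_apply_zero]; simp
    · rw [LSeries.term_of_ne_zero hn.ne', wa, Complex.ofReal_mul, div_eq_mul_inv, mul_assoc]
      congr 1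
      have hn' : (0:ℝ) < n := by exact_mod_cast hn
      rw [← Complex.cpow_neg, Real.rpow_def_of_pos hn', Complex.ofReal_exp, ← Complex.exp_add,
        Complex.cpow_def_of_ne_zero (by exact_mod_cast hn.ne'), ← Complex.natCast_log]
      congr 1
      push_cast; ring
  refine ⟨residueClass_nonneg _, by
    have := Nat.totient_pos.2 (NeZero.pos m); positivity, fun σ hσ => ?_,
    continuousOn_LFunctionResidueClassAux _, fun σ hσ t => ?_⟩
  · have h1 : LSeriesSummable (fun n => ((residueClass (1 : ZMod m) n : ℝ) : ℂ)) (σ + (0:ℝ) * Complex.I) := by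
      apply LSeriesSummable_of_abscissaOfAbsConv_lt_re
      refine (abscissaOfAbsConv_residueClass_le_one _).trans_lt ?_
      simpa using by exact_mod_cast hσ
    unfold LSeriesSummable at h1
    have h2 := h1.norm
    refine h2.congr fun n => ?_
    rw [hterm σ hσ, norm_mul, norm_cexp_neg_mul_I, mul_one, Complex.norm_real, Real.norm_of_nonneg]
    exact wa_nonneg (residueClass_nonneg _) _ _
  · rw [eqOn_LFunctionResidueClassAux isUnit_one (by simpa using hσ)]
    simp only [LSeries]
    simp_rw [hterm σ hσ]
    congr 1
    push_cast
    rw [mul_one_div]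
    congr 1
    ring

/-- Chebyshev theta function along the primes `p` with `m ∣ p - 1`. -/
noncomputable def th (m N : ℕ) : ℝ :=
  ∑ p ∈ Finset.range (N + 1), if p.Prime ∧ m ∣ p - 1 then Real.log p else 0

lemma cast_eq_one_iff (m : ℕ) {p : ℕ} (hp : 1 ≤ p) : ((p : ZMod m) = 1) ↔ m ∣ p - 1 := by
  rw [← ZMod.natCast_eq_zero_iff, Nat.cast_sub hp, sub_eq_zero, Nat.cast_one]

open ArithmeticFunction in
lemma psi_sub_th (m N : ℕ) (hN : 1 ≤ N) :
    |(∑ n ∈ Finset.range (N + 1), vonMangoldt.residueClass (1 : ZMod m) n) - th m N| ≤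
      2 * √N * Real.log N := by
  have h0 := Chebyshev.psi_sub_theta_le (x := N) (by exact_mod_cast hN)
  refine le_trans ?_ h0
  rw [Chebyshev.psi_sub_theta_eq_sum_not_prime, th, ← Finset.sum_sub_distrib]
  refine (Finset.abs_sum_le_sum_abs _ _).trans ?_
  rw [Nat.floor_natCast]
  have : ∀ n ∈ Finset.range (N + 1), |vonMangoldt.residueClass (1 : ZMod m) n -
      (if n.Prime ∧ m ∣ n - 1 then Real.log n else 0)| ≤ if n.Prime then 0 else vonMangoldt n := by
    intro n _
    by_cases hp : n.Prime
    · by_cases hd : m ∣ n - 1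
      · have := (cast_eq_one_iff m hp.one_lt.le).2 hd
        simp [hp, hd, Set.indicator_apply, this, vonMangoldt_apply_prime hp]
      · have : ¬ ((n : ZMod m) = 1) := fun h => hd ((cast_eq_one_iff m hp.one_lt.le).1 h)
        simp only [hp, hd, and_false, if_false, sub_zero, if_true]
        rw [vonMangoldt.residueClass, Set.indicator_of_notMem (by exact this), abs_zero]
    · simp only [hp, false_and, if_false, sub_zero]
      rw [abs_of_nonneg (vonMangoldt.residueClass_nonneg _ _)]
      exact vonMangoldt.residueClass_le _ _
  refine (Finset.sum_le_sum this).trans ?_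
  have hr : Finset.range (N + 1) = Finset.Icc 0 N := by ext; simp [Nat.lt_succ_iff]
  rw [Finset.sum_filter, hr, ← Finset.add_sum_Ioc_eq_sum_Icc (Nat.zero_le N)]
  refine le_of_eq ?_
  simp [ite_not]

theorem pnt_ap (m : ℕ) (hm : 0 < m) :
    Tendsto (fun N : ℕ => th m N / N) atTop (𝓝 ((m.totient : ℝ)⁻¹)) := by
  have : NeZero m := ⟨hm.ne'⟩
  have h1 := wiener_ikehara (wiHyp_residue m) (by simp)
  have h2 : Tendsto (fun N : ℕ => 2 * √N * Real.log N / N) atTop (𝓝 0) := by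
    have h3 := (isLittleO_log_rpow_atTop (r := 1/2) (by norm_num)).tendsto_div_nhds_zero
    have h4 := (h3.comp tendsto_natCast_atTop_atTop).const_mul 2
    rw [mul_zero] at h4
    refine h4.congr' ?_
    filter_upwards [eventually_gt_atTop 0] with N hN
    have hN' : (0:ℝ) < N := by exact_mod_cast hN
    simp only [Function.comp]
    rw [← Real.sqrt_eq_rpow]
    have := Real.sqrt_pos.2 hN'
    field_simp
    rw [Real.sq_sqrt hN'.le]
  have h5 : Tendsto (fun N : ℕ => (∑ n ∈ Finset.range (N + 1),
      ArithmeticFunction.vonMangoldt.residueClass (1 : ZMod m) n) / N - th m N / N) atTop (𝓝 0) := by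
    refine squeeze_zero_norm' ?_ h2
    filter_upwards [eventually_ge_atTop 1] with N hN
    rw [← sub_div, norm_div, Real.norm_eq_abs, Real.norm_of_nonneg (Nat.cast_nonneg N)]
    exact div_le_div_of_nonneg_right (psi_sub_th m N hN) (Nat.cast_nonneg N)
  simpa using h1.sub h5

end Part6

section Part7
open Filter Topology

lemma fact_aux {p : ℕ} (hp : p.Prime) (M : ℕ) : M.factorial.factorization p ≤ M := by
  have : Fact p.Prime := ⟨hp⟩
  rw [Nat.factorization_def _ hp]
  have h := sub_one_mul_padicValNat_factorial (p := p) M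
  have h2 := hp.two_le
  have : 1 * padicValNat p M.factorial ≤ (p - 1) * padicValNat p M.factorial :=
    Nat.mul_le_mul_right _ (by omega)
  omega

lemma natCast_zmod_surj_aux (D : ℕ) (hD : D ≠ 0) (x : ZMod D) : ∃ r : ℕ, (r : ZMod D) = x := by
  have : NeZero D := ⟨hD⟩
  exact ⟨x.val, ZMod.natCast_zmod_val x⟩

/-- `M! ∣ e^M ∏_{m ≤ M} (e m + 1)`. -/
lemma factorial_dvd_aux (e M : ℕ) (he : 0 < e) :
    M.factorial ∣ e ^ M * ∏ i ∈ Finset.range M, (e * (i + 1) + 1) := by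
  rw [Nat.dvd_iff_prime_pow_dvd_dvd]
  intro p k hp hk
  by_cases hpe : p ∣ e
  · refine Dvd.dvd.mul_right ?_ _
    have hkM : k ≤ M := by
      have h1 := (hp.pow_dvd_iff_le_factorization M.factorial_ne_zero).1 hk
      exact h1.trans (fact_aux hp M)
    exact (pow_dvd_pow_of_dvd hpe k).trans (pow_dvd_pow e hkM)
  · refine Dvd.dvd.mul_left ?_ _
    have hco : Nat.Coprime e (p ^ k) := ((hp.coprime_iff_not_dvd.2 hpe).symm).pow_right k
    set D := p ^ k with hD
    rw [← ZMod.natCast_eq_zero_iff] at hk ⊢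
    have hu : IsUnit (e : ZMod D) := (ZMod.isUnit_iff_coprime e D).2 hco
    obtain ⟨u, hu⟩ := hu
    obtain ⟨r, hr⟩ := natCast_zmod_surj_aux D (pow_ne_zero k hp.ne_zero) ((u⁻¹ : (ZMod D)ˣ) : ZMod D)
    have key : ((∏ i ∈ Finset.range M, (e * (i + 1) + 1) : ℕ) : ZMod D) =
        (e : ZMod D) ^ M * (((r + 1).ascFactorial M : ℕ) : ZMod D) := by
      rw [Nat.ascFactorial_eq_prod_range]
      push_cast
      rw [← Finset.card_range M, ← Finset.prod_const, Finset.card_range,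
        ← Finset.prod_mul_distrib]
      refine Finset.prod_congr rfl fun i _ => ?_
      have : (e : ZMod D) * r = 1 := by rw [hr, ← hu]; simp
      linear_combination -this
    rw [key]
    obtain ⟨c, hc⟩ := Nat.factorial_dvd_ascFactorial (r + 1) M
    rw [hc, Nat.cast_mul, hk]
    simp

lemma prod_primes_le (e M : ℕ) (he : 2 ≤ e) :
    ∏ p ∈ (Finset.range (e * M + 2)).filter (fun p => (p.Prime ∧ e ∣ p - 1) ∧ M < p), p ≤
      (e * (e + 1)) ^ M := by
  have h1 := factorial_dvd_aux e M (by omega)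
  obtain ⟨Q, hQ⟩ := h1
  have hfpos := M.factorial_pos
  have hdvd : ∏ p ∈ (Finset.range (e * M + 2)).filter
      (fun p => (p.Prime ∧ e ∣ p - 1) ∧ M < p), p ∣ Q := by
    refine Finset.prod_primes_dvd _ (fun p hp => ?_) (fun p hp => ?_)
    · rw [Finset.mem_filter] at hp
      exact hp.2.1.1.prime
    · rw [Finset.mem_filter, Finset.mem_range] at hp
      obtain ⟨hlt, ⟨hpp, ⟨c, hc⟩⟩, hM⟩ := hp
      have hp2 := hpp.two_le
      have hpe : p = e * c + 1 := by omega
      have hc0 : 0 < c := by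
        rcases Nat.eq_zero_or_pos c with rfl | h
        · omega
        · exact h
      have hcM : c ≤ M := by
        by_contra h
        have : e * (M + 1) ≤ e * c := Nat.mul_le_mul_left e (by omega)
        rw [mul_add] at this
        omega
      have hd : p ∣ M.factorial * Q := by
        rw [← hQ]
        refine Dvd.dvd.mul_left ?_ _
        have := Finset.dvd_prod_of_mem (fun i => e * (i + 1) + 1)
          (Finset.mem_range.2 (show c - 1 < M by omega))
        simp only [Nat.sub_add_cancel hc0] at this
        rwa [← hpe] at this
      refine (hpp.dvd_mul.1 hd).resolve_left fun h => ?_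
      rw [hpp.dvd_factorial] at h
      omega
  have hQpos : 0 < Q := by
    rcases Nat.eq_zero_or_pos Q with rfl | h
    · exfalso
      rw [mul_zero] at hQ
      have : 0 < e ^ M * ∏ i ∈ Finset.range M, (e * (i + 1) + 1) :=
        Nat.mul_pos (Nat.pow_pos (by omega)) (Finset.prod_pos fun i _ => by omega)
      omega
    · exact h
  refine (Nat.le_of_dvd hQpos hdvd).trans ?_
  refine le_of_mul_le_mul_left (a := M.factorial) ?_ hfpos
  rw [← hQ, mul_pow]
  have : ∏ i ∈ Finset.range M, (e * (i + 1) + 1) ≤ ∏ i ∈ Finset.range M, ((e + 1) * (i + 1)) :=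
    Finset.prod_le_prod' fun i _ => by nlinarith
  rw [Finset.prod_mul_distrib, Finset.prod_range_add_one_eq_factorial, Finset.prod_const,
    Finset.card_range] at this
  calc _ ≤ e ^ M * ((e + 1) ^ M * M.factorial) := Nat.mul_le_mul_left _ this
    _ = _ := by ring

lemma th_mono (m : ℕ) : Monotone (th m) := by
  intro a b hab
  unfold th
  refine Finset.sum_le_sum_of_subset_of_nonneg (Finset.range_mono (by omega)) fun p _ _ => ?_
  split_ifs
  · exact Real.log_natCast_nonneg p
  · rfl

lemma th_step (e M : ℕ) (he : 2 ≤ e) :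
    th e (e * M + 1) ≤ th e M + M * Real.log (e * (e + 1)) := by
  have h1 := prod_primes_le e M he
  have h2 : ∑ p ∈ (Finset.range (e * M + 2)).filter (fun p => (p.Prime ∧ e ∣ p - 1) ∧ M < p),
      Real.log p ≤ M * Real.log (e * (e + 1)) := by
    rw [← Real.log_prod (fun p hp => by
      rw [Finset.mem_filter] at hp
      exact_mod_cast hp.2.1.1.ne_zero), ← Real.log_pow]
    have h1c := (Nat.cast_le (α := ℝ)).2 h1
    push_cast at h1c
    refine Real.log_le_log ?_ h1c
    refine Finset.prod_pos fun p hp => ?_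
    rw [Finset.mem_filter] at hp
    exact_mod_cast hp.2.1.1.pos
  have h3 : th e (e * M + 1) ≤ th e M +
      ∑ p ∈ (Finset.range (e * M + 2)).filter (fun p => (p.Prime ∧ e ∣ p - 1) ∧ M < p),
      Real.log p := by
    unfold th
    have hsub : Finset.range (M + 1) ⊆ Finset.range (e * M + 1 + 1) :=
      Finset.range_mono (by nlinarith)
    rw [← Finset.sum_sdiff hsub, add_comm, Finset.sum_filter]
    refine add_le_add le_rfl ?_
    refine (Finset.sum_le_sum (g := fun p => if (p.Prime ∧ e ∣ p - 1) ∧ M < p then Real.log p else 0)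
      fun p hp => ?_).trans (Finset.sum_le_sum_of_subset_of_nonneg (Finset.sdiff_subset) ?_)
    · simp only [Finset.mem_sdiff, Finset.mem_range] at hp
      have : M < p := by omega
      simp [this]
    · intro p _ _
      split_ifs
      · exact Real.log_natCast_nonneg p
      · rfl
  linarith

/-- uniform upper bound -/
lemma th_le (e : ℕ) (he : 2 ≤ e) (N : ℕ) : th e N ≤ 2 * (Real.log (e * (e + 1)) / e) * N := by
  induction N using Nat.strong_induction_on with
  | _ N ih =>
    have heR : (2:ℝ) ≤ e := by exact_mod_cast he
    have hL : 0 ≤ Real.log (e * (e + 1)) := Real.log_nonneg (by nlinarith)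
    rcases Nat.lt_or_ge N 2 with hN | hN
    · have : th e N = 0 := by
        unfold th
        refine Finset.sum_eq_zero fun p hp => ?_
        rw [Finset.mem_range] at hp
        rw [if_neg]
        rintro ⟨h, -⟩
        have := h.two_le
        omega
      rw [this]; positivity
    · set M := N / e with hM
      have hMN : M < N := Nat.div_lt_self (by omega) (by omega)
      -- the primes up to N congruent to 1 are at most e*M+1
      have h1 : th e N ≤ th e (e * M + 1) := by
        have : N ≤ e * M + 1 ∨ e * M + 1 < N := by omega
        rcases this with h | h
        · exact th_mono e h
        · unfold th
          have hsub : Finset.range (e * M + 1 + 1) ⊆ Finset.range (N + 1) :=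
            Finset.range_mono (by omega)
          rw [← Finset.sum_sdiff hsub, Finset.sum_eq_zero, zero_add]
          intro p hp
          simp only [Finset.mem_sdiff, Finset.mem_range] at hp
          rw [if_neg]
          rintro ⟨hpp, c, hc⟩
          have h2 : N < e * (M + 1) := by
            have := Nat.lt_mul_div_succ N (show 0 < e by omega)
            exact this
          have h3 : e * c < e * (M + 1) := by omega
          have h4 : c < M + 1 := Nat.lt_of_mul_lt_mul_left h3
          have h5 : e * c ≤ e * M := Nat.mul_le_mul_left e (by omega)
          omega
      have h2 := th_step e M he
      have h3 := ih M hMN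
      have h4 : (M:ℝ) ≤ N / e := Nat.cast_div_le
      have h5 : (0:ℝ) < e := by linarith
      set L := Real.log (e * (e + 1))
      have h6 : 2 * (L / e) * M ≤ L * (M:ℝ) := by
        have : 2 * (L / e) ≤ L := by
          rw [← mul_div_assoc, div_le_iff₀ h5]; nlinarith
        exact mul_le_mul_of_nonneg_right this (Nat.cast_nonneg M)
      calc th e N ≤ 2 * L * M := by linarith
        _ ≤ 2 * L * (N / e) := by gcongr
        _ = _ := by ring

end Part7

section Part8
open Filter Topology

section arith
open ArithmeticFunction

noncomputable def afI1 : ArithmeticFunction ℝ := ⟨fun n => (n : ℝ)⁻¹, by simp⟩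
noncomputable def afI2 : ArithmeticFunction ℝ := ⟨fun n => ((n : ℝ) ^ 2)⁻¹, by simp⟩
noncomputable def afMu : ArithmeticFunction ℝ := ⟨fun n => (moebius n : ℝ), by simp⟩
noncomputable def afPhi : ArithmeticFunction ℝ := ⟨fun n => (n.totient : ℝ)⁻¹, by simp⟩
lemma afI1_apply (n : ℕ) : afI1 n = (n : ℝ)⁻¹ := rfl
lemma afI2_apply (n : ℕ) : afI2 n = ((n : ℝ) ^ 2)⁻¹ := rfl
lemma afMu_apply (n : ℕ) : afMu n = (moebius n : ℝ) := rfl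
lemma afPhi_apply (n : ℕ) : afPhi n = (n.totient : ℝ)⁻¹ := rfl
noncomputable def afh : ArithmeticFunction ℝ := (afMu.pmul afI1) * afI2

lemma afI1_mult : afI1.IsMultiplicative := by
  refine ⟨by simp [afI1], fun {m n} _ => ?_⟩
  simp [afI1, mul_comm]

lemma afI2_mult : afI2.IsMultiplicative := by
  refine ⟨by simp [afI2], fun {m n} _ => ?_⟩
  simp [afI2, mul_comm, mul_pow]

lemma afMu_mult : afMu.IsMultiplicative := by
  refine ⟨by simp [afMu], fun {m n} h => ?_⟩
  simp only [afMu_apply]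
  rw [isMultiplicative_moebius.map_mul_of_coprime h, Int.cast_mul]

lemma afPhi_mult : afPhi.IsMultiplicative := by
  refine ⟨by simp [afPhi], fun {m n} h => ?_⟩
  simp [afPhi, Nat.totient_mul h, mul_comm]

lemma afh_mult : afh.IsMultiplicative := (afMu_mult.pmul afI1_mult).mul afI2_mult

lemma totient_eq_aux (n : ℕ) (hn : 0 < n) :
    ∑ x ∈ n.divisorsAntidiagonal, (moebius x.1 : ℝ) * (x.2 : ℝ) = n.totient := by
  refine (sum_eq_iff_sum_mul_moebius_eq (R := ℝ) (f := fun n => (n.totient : ℝ))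
    (g := fun n => (n : ℝ))).1 (fun n hn => ?_) n hn
  exact_mod_cast Nat.sum_totient n

lemma phi_div_aux (n : ℕ) : ((afMu.pmul afI1) * (zeta : ArithmeticFunction ℝ)) n =
    (n.totient : ℝ) / n := by
  rcases Nat.eq_zero_or_pos n with rfl | hn
  · simp
  rw [ArithmeticFunction.mul_apply, ← totient_eq_aux n hn, Finset.sum_div]
  refine Finset.sum_congr rfl fun x hx => ?_
  rw [Nat.mem_divisorsAntidiagonal] at hx
  have h1 : x.1 ≠ 0 := by rintro h; simp [h] at hx; omega
  have h2 : x.2 ≠ 0 := by rintro h; simp [h] at hx; omega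
  have h1' : (x.1 : ℝ) ≠ 0 := by exact_mod_cast h1
  have h2' : (x.2 : ℝ) ≠ 0 := by exact_mod_cast h2
  simp only [pmul_apply, afMu_apply, afI1_apply, natCoe_apply, zeta_apply, h2,
    if_false, ← hx.1]
  push_cast
  field_simp

lemma sum_afh (n : ℕ) : ∑ m ∈ n.divisors, afh m = (stephensSum n : ℝ) / (n : ℝ) ^ 2 := by
  have h : (afh * (zeta : ArithmeticFunction ℝ)) n = ∑ m ∈ n.divisors, afh m :=
    coe_mul_zeta_apply
  rw [← h, afh, mul_right_comm, ArithmeticFunction.mul_apply]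
  simp only [phi_div_aux]
  unfold stephensSum
  push_cast
  rw [Nat.sum_divisorsAntidiagonal (f := fun a b => (a.totient : ℝ) / a * afI2 b), Finset.sum_div]
  refine Finset.sum_congr rfl fun d hd => ?_
  rw [Nat.mem_divisors] at hd
  obtain ⟨⟨c, rfl⟩, hn⟩ := hd
  have h1 : d ≠ 0 := by rintro rfl; simp at hn
  have h2 : c ≠ 0 := by rintro rfl; simp at hn
  have h1' : (d : ℝ) ≠ 0 := by exact_mod_cast h1
  have h2' : (c : ℝ) ≠ 0 := by exact_mod_cast h2
  rw [Nat.mul_div_cancel_left _ (Nat.pos_of_ne_zero h1)]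
  simp only [afI2_apply]
  push_cast
  field_simp

lemma afh_prime_pow (p a : ℕ) (hp : p.Prime) :
    afh (p ^ (a + 1)) = (1 - (p : ℝ)) / (p : ℝ) ^ (2 * (a + 1)) := by
  have hp0 : (p : ℝ) ≠ 0 := by exact_mod_cast hp.ne_zero
  rw [afh, ArithmeticFunction.mul_apply,
    Nat.sum_divisorsAntidiagonal (f := fun a b => (afMu.pmul afI1) a * afI2 b),
    Nat.sum_divisors_prime_pow hp, Finset.sum_range_succ', Finset.sum_range_succ',
    Finset.sum_eq_zero]
  · have : p ^ (a + 1) / p ^ (0 + 1) = p ^ a := by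
      rw [Nat.pow_div (by omega) hp.pos]; simp
    rw [this]
    simp only [pmul_apply, afMu_apply, afI1_apply, afI2_apply]
    simp [moebius_apply_prime hp]
    field_simp
    ring
  · intro x hx
    simp only [pmul_apply, afMu_apply]
    rw [moebius_apply_prime_pow hp (by omega), if_neg (by omega)]
    simp

lemma afh_bound (m : ℕ) (hm : 0 < m) : |afh m| ≤ (1 + Real.log m) / m := by
  have hm' : (0 : ℝ) < m := by exact_mod_cast hm
  rw [afh, ArithmeticFunction.mul_apply]
  refine (Finset.abs_sum_le_sum_abs _ _).trans ?_
  have h1 : ∀ x ∈ m.divisorsAntidiagonal, |(afMu.pmul afI1) x.1 * afI2 x.2| ≤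
      (x.2 : ℝ)⁻¹ * (m : ℝ)⁻¹ := by
    intro x hx
    rw [Nat.mem_divisorsAntidiagonal] at hx
    simp only [pmul_apply, afMu_apply, afI1_apply, afI2_apply]
    rw [← hx.1, abs_mul, abs_mul]
    have hmu : |(moebius x.1 : ℝ)| ≤ 1 := by
      exact_mod_cast abs_moebius_le_one (n := x.1)
    push_cast
    rw [abs_of_nonneg (a := ((x.1:ℝ)⁻¹)) (by positivity),
      abs_of_nonneg (a := (((x.2:ℝ)^2)⁻¹)) (by positivity)]
    calc |(moebius x.1 : ℝ)| * (x.1 : ℝ)⁻¹ * ((x.2 : ℝ) ^ 2)⁻¹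
        ≤ 1 * (x.1 : ℝ)⁻¹ * ((x.2 : ℝ) ^ 2)⁻¹ := by gcongr
      _ = _ := by rw [mul_inv]; ring
  refine (Finset.sum_le_sum h1).trans ?_
  rw [← Finset.sum_mul, div_eq_mul_inv]
  refine mul_le_mul_of_nonneg_right ?_ (by positivity)
  rw [Nat.sum_divisorsAntidiagonal' (f := fun a b => (b : ℝ)⁻¹)]
  have h2 := harmonic_le_one_add_log m
  rw [harmonic_eq_sum_Icc] at h2
  push_cast at h2
  refine le_trans (Finset.sum_le_sum_of_subset_of_nonneg (fun d hd => ?_) fun _ _ _ => ?_) h2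
  · rw [Finset.mem_Icc]
    exact ⟨Nat.pos_of_mem_divisors hd, Nat.divisor_le hd⟩
  · positivity

/-- uniform constants -/
noncomputable def cth (m : ℕ) : ℝ :=
  if m = 1 then Real.log 4 else 2 * (Real.log (m * (m + 1)) / m)

lemma th_le_cth (m : ℕ) (hm : 0 < m) (N : ℕ) : th m N ≤ cth m * N := by
  unfold cth
  split_ifs with h
  · subst h
    have := Chebyshev.theta_le_log4_mul_x (x := (N : ℝ)) (by positivity)
    refine le_trans (le_of_eq ?_) this
    unfold th
    rw [Chebyshev.theta_eq_sum_Icc, Nat.floor_natCast, Finset.sum_filter, Finset.range_eq_Ico]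
    refine Finset.sum_congr (by ext; simp [Nat.lt_succ_iff]) fun p _ => by simp
  · exact th_le m (by omega) N

lemma th_nonneg (m N : ℕ) : 0 ≤ th m N := by
  refine Finset.sum_nonneg fun p _ => ?_
  split_ifs
  · exact Real.log_natCast_nonneg p
  · rfl

lemma cth_summable : Summable (fun m : ℕ => |afh m| * cth m) := by
  have h0 : Summable (fun m : ℕ => 120 * (m : ℝ) ^ (-(3/2) : ℝ)) :=
    (Real.summable_nat_rpow.2 (by norm_num)).mul_left _
  refine Summable.of_norm_bounded_eventually_nat h0 ?_
  filter_upwards [eventually_ge_atTop 2] with m hm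
  have hm2 : (2 : ℝ) ≤ m := by exact_mod_cast hm
  have hm0 : (0 : ℝ) < m := by linarith
  have hlog : Real.log m ≤ 4 * (m : ℝ) ^ ((1/4 : ℝ)) := by
    have := Real.log_le_rpow_div hm0.le (show (0 : ℝ) < 1/4 by norm_num)
    linarith
  have hone : 1 ≤ (m : ℝ) ^ ((1/4 : ℝ)) := Real.one_le_rpow (by linarith) (by norm_num)
  have hlog0 : 0 ≤ Real.log m := Real.log_natCast_nonneg m
  have hl2 : Real.log (m * (m + 1)) ≤ 3 * Real.log m := by
    have : Real.log (m * (m + 1)) ≤ Real.log ((m : ℝ) ^ 3) :=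
      Real.log_le_log (by positivity) (by nlinarith [sq_nonneg ((m:ℝ) - 2)])
    rwa [Real.log_pow] at this
  have hl2' : 0 ≤ Real.log (m * (m + 1)) := Real.log_nonneg (by nlinarith)
  have hc : cth m = 2 * (Real.log (m * (m + 1)) / m) := by
    unfold cth; rw [if_neg (by omega)]
  have hc0 : 0 ≤ cth m := by rw [hc]; positivity
  rw [Real.norm_of_nonneg (mul_nonneg (abs_nonneg _) hc0), hc]
  calc |afh m| * (2 * (Real.log (m * (m + 1)) / m))
      ≤ ((5 * (m : ℝ) ^ ((1/4 : ℝ))) / m) * (2 * ((12 * (m : ℝ) ^ ((1/4 : ℝ))) / m)) := by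
        refine mul_le_mul ((afh_bound m (by omega)).trans ?_) ?_ (by positivity) (by positivity)
        · gcongr; linarith
        · gcongr; linarith
    _ = 120 * ((m : ℝ) ^ ((1/4 : ℝ)) * (m : ℝ) ^ ((1/4 : ℝ)) * ((m : ℝ) ^ (2:ℕ))⁻¹) := by
        field_simp; ring
    _ = 120 * (m : ℝ) ^ (-(3/2) : ℝ) := by
        rw [← Real.rpow_natCast, ← Real.rpow_neg hm0.le, ← Real.rpow_add hm0, ← Real.rpow_add hm0]
        norm_num

noncomputable def FF (N : ℕ) : ℝ := ∑ p ∈ Finset.range (N + 1),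
  if p.Prime then Real.log p * ((stephensSum (p - 1) : ℝ) / ((p : ℝ) - 1) ^ 2) else 0

lemma FF_eq (N : ℕ) : FF N = ∑' m : ℕ, afh m * th m N := by
  rw [tsum_eq_sum (s := Finset.range (N + 1))]
  · unfold th FF
    simp_rw [Finset.mul_sum]
    rw [Finset.sum_comm]
    refine Finset.sum_congr rfl fun p hp => ?_
    rw [Finset.mem_range] at hp
    split_ifs with hpp
    · have h2 := hpp.two_le
      have h := sum_afh (p - 1)
      rw [Nat.cast_sub (by omega), Nat.cast_one] at h
      rw [← h, Finset.mul_sum]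
      simp only [hpp, true_and]
      have hd : (p - 1).divisors = (Finset.range (N + 1)).filter (fun m => m ∣ p - 1) := by
        ext m
        simp only [Nat.mem_divisors, Finset.mem_filter, Finset.mem_range]
        constructor
        · rintro ⟨h, h'⟩
          have := Nat.le_of_dvd (by omega) h
          exact ⟨by omega, h⟩
        · rintro ⟨_, h⟩
          exact ⟨h, by omega⟩
      rw [hd, Finset.sum_filter]
      refine Finset.sum_congr rfl fun m _ => ?_
      split_ifs <;> ring
    · simp [hpp]
  · intro m hm
    rw [Finset.mem_range] at hm
    have : th m N = 0 := by
      refine Finset.sum_eq_zero fun p hp => ?_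
      rw [Finset.mem_range] at hp
      rw [if_neg]
      rintro ⟨hpp, h⟩
      have h2 := hpp.two_le
      have := Nat.le_of_dvd (by omega) h
      omega
    rw [this, mul_zero]

lemma inv_totient_le (m : ℕ) (hm : 0 < m) : (m.totient : ℝ)⁻¹ ≤ cth m := by
  refine le_of_tendsto (pnt_ap m hm) ?_
  filter_upwards [eventually_gt_atTop 0] with N hN
  rw [div_le_iff₀ (by exact_mod_cast hN)]
  exact th_le_cth m hm N

lemma summable_g : Summable (fun m : ℕ => ‖(afh.pmul afPhi) m‖) := by
  refine Summable.of_nonneg_of_le (fun _ => norm_nonneg _) (fun m => ?_) cth_summable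
  rw [pmul_apply, norm_mul]
  rcases Nat.eq_zero_or_pos m with rfl | hm
  · simp
  · rw [Real.norm_eq_abs]
    refine mul_le_mul_of_nonneg_left ?_ (abs_nonneg _)
    simp only [afPhi_apply]
    rw [Real.norm_of_nonneg (by positivity)]
    exact inv_totient_le m hm

lemma g_term (p : ℕ) (hp : p.Prime) (a : ℕ) :
    (afh.pmul afPhi) (p ^ (a + 1)) = -((p : ℝ) ^ 2)⁻¹ * (((p : ℝ) ^ 3)⁻¹) ^ a := by
  have hp2 : (2 : ℝ) ≤ p := by exact_mod_cast hp.two_le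
  have hp0 : (p : ℝ) ≠ 0 := by linarith
  have hp1 : (p : ℝ) - 1 ≠ 0 := by linarith
  rw [pmul_apply, afh_prime_pow p a hp]
  simp only [afPhi_apply]
  rw [Nat.totient_prime_pow_succ hp, Nat.cast_mul, Nat.cast_sub hp.one_le, inv_pow, ← pow_mul]
  push_cast
  field_simp
  ring

lemma g_local (p : ℕ) (hp : p.Prime) :
    ∑' a : ℕ, (afh.pmul afPhi) (p ^ a) = 1 - (p : ℝ) / ((p : ℝ) ^ 3 - 1) := by
  have hp2 : (2 : ℝ) ≤ p := by exact_mod_cast hp.two_le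
  have hp0 : (p : ℝ) ≠ 0 := by linarith
  have hp3 : (2 : ℝ) ^ 3 ≤ (p : ℝ) ^ 3 := by gcongr
  have hr : |((p : ℝ) ^ 3)⁻¹| < 1 := by
    rw [abs_of_nonneg (by positivity)]
    exact inv_lt_one_of_one_lt₀ (by linarith)
  have hs : HasSum (fun a : ℕ => (afh.pmul afPhi) (p ^ (a + 1)))
      (-((p : ℝ) ^ 2)⁻¹ * (1 - ((p : ℝ) ^ 3)⁻¹)⁻¹) := by
    simp_rw [g_term p hp]
    exact (hasSum_geometric_of_abs_lt_one hr).mul_left _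
  have hs' := (hasSum_nat_add_iff (f := fun a : ℕ => (afh.pmul afPhi) (p ^ a)) 1).1 hs
  rw [hs'.tsum_eq]
  simp only [Finset.range_one, Finset.sum_singleton, pow_zero]
  rw [(afh_mult.pmul afPhi_mult).1]
  have : (p : ℝ) ^ 3 - 1 ≠ 0 := by linarith
  field_simp
  ring

lemma tsum_g : ∑' m, (afh.pmul afPhi) m = stephensConstant := by
  have h := (afh_mult.pmul afPhi_mult).eulerProduct_hasProd summable_g
  rw [← h.tprod_eq, stephensConstant]
  exact tprod_congr fun p => g_local p p.2

lemma FF_tendsto : Tendsto (fun N : ℕ => FF N / N) atTop (𝓝 stephensConstant) := by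
  rw [← tsum_g]
  simp_rw [FF_eq, ← tsum_div_const]
  refine tendsto_tsum_of_dominated_convergence cth_summable (fun m => ?_) ?_
  · rcases Nat.eq_zero_or_pos m with rfl | hm
    · simp
    · simp_rw [mul_div_assoc]
      exact (pnt_ap m hm).const_mul _
  · filter_upwards [eventually_gt_atTop 0] with N hN m
    have hN' : (0:ℝ) < N := by exact_mod_cast hN
    rcases Nat.eq_zero_or_pos m with rfl | hm
    · simp
    rw [mul_div_assoc, norm_mul, Real.norm_eq_abs,
      Real.norm_of_nonneg (div_nonneg (th_nonneg _ _) hN'.le)]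
    refine mul_le_mul_of_nonneg_left ?_ (abs_nonneg _)
    rw [div_le_iff₀ hN']
    exact th_le_cth m hm N

end arith

end Part8

section Part9
open Filter Topology

noncomputable def ww (k n : ℕ) : ℝ := (n : ℝ) ^ k * ((n : ℝ) - 1) ^ 2 / Real.log n

lemma ww_nonneg (k n : ℕ) : 0 ≤ ww k n := by
  unfold ww
  have := Real.log_natCast_nonneg n
  positivity

lemma ww_mono (k : ℕ) : Monotone (ww k) := by
  refine monotone_nat_of_le_succ fun n => ?_
  rcases Nat.lt_or_ge n 2 with h | h
  · have : ww k n = 0 := by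
      interval_cases n <;> simp [ww]
    rw [this]; exact ww_nonneg _ _
  · have h2 : (2 : ℝ) ≤ n := by exact_mod_cast h
    have hl : 0 < Real.log n := Real.log_pos (by linarith)
    have hl' : 0 < Real.log ((n : ℝ) + 1) := Real.log_pos (by linarith)
    have h1 := Real.one_sub_inv_le_log_of_pos (show (0:ℝ) < n by linarith)
    have h3 : Real.log ((n : ℝ) + 1) ≤ Real.log n + (n : ℝ)⁻¹ := by
      have := Real.log_le_sub_one_of_pos (show (0:ℝ) < ((n : ℝ) + 1) / n by positivity)
      rw [Real.log_div (by positivity) (by positivity)] at this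
      have h4 : ((n : ℝ) + 1) / n - 1 = (n : ℝ)⁻¹ := by field_simp; ring
      linarith
    have key : ((n : ℝ) - 1) / Real.log n ≤ n / Real.log ((n : ℝ) + 1) := by
      rw [div_le_div_iff₀ hl hl']
      have h5 : ((n : ℝ) - 1) * (n : ℝ)⁻¹ = 1 - (n : ℝ)⁻¹ := by field_simp
      nlinarith [mul_le_mul_of_nonneg_left h3 (show 0 ≤ (n : ℝ) - 1 by linarith)]
    unfold ww
    push_cast
    calc (n : ℝ) ^ k * ((n : ℝ) - 1) ^ 2 / Real.log n
        = (n : ℝ) ^ k * ((n : ℝ) - 1) * (((n : ℝ) - 1) / Real.log n) := by ring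
      _ ≤ ((n : ℝ) + 1) ^ k * n * (n / Real.log ((n : ℝ) + 1)) := by
          have h0 : 0 ≤ (n : ℝ) - 1 := by linarith
          gcongr <;> linarith
      _ = _ := by ring

lemma abel_bound (a w : ℕ → ℝ) (hw : Monotone w) (hw0 : ∀ n, 0 ≤ w n) (N : ℕ) (B : ℝ)
    (hB : ∀ n ≤ N, |∑ i ∈ Finset.range (n + 1), a i| ≤ B) :
    |∑ n ∈ Finset.range (N + 1), w n * a n| ≤ 2 * B * w N := by
  have key : ∀ M, ∑ n ∈ Finset.range (M + 1), w n * a n =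
      w M * (∑ i ∈ Finset.range (M + 1), a i) -
        ∑ n ∈ Finset.range M, (w (n + 1) - w n) * ∑ i ∈ Finset.range (n + 1), a i := by
    intro M
    induction M with
    | zero => simp
    | succ M ih =>
      rw [Finset.sum_range_succ, ih, Finset.sum_range_succ _ (M + 1),
        Finset.sum_range_succ (fun n => (w (n + 1) - w n) * ∑ i ∈ Finset.range (n + 1), a i) M]
      ring
  have hB0 : 0 ≤ B := (abs_nonneg _).trans (hB N le_rfl)
  rw [key]
  refine (abs_sub _ _).trans ?_
  have h1 : |w N * ∑ i ∈ Finset.range (N + 1), a i| ≤ w N * B := by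
    rw [abs_mul, abs_of_nonneg (hw0 N)]
    exact mul_le_mul_of_nonneg_left (hB N le_rfl) (hw0 N)
  have h2 : |∑ n ∈ Finset.range N, (w (n + 1) - w n) * ∑ i ∈ Finset.range (n + 1), a i| ≤
      (w N - w 0) * B := by
    refine (Finset.abs_sum_le_sum_abs _ _).trans ?_
    rw [← Finset.sum_range_sub, Finset.sum_mul]
    refine Finset.sum_le_sum fun n hn => ?_
    have := sub_nonneg.2 (hw (Nat.le_succ n))
    rw [Finset.mem_range] at hn
    rw [abs_mul, abs_of_nonneg this]
    exact mul_le_mul_of_nonneg_left (hB n hn.le) this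
  nlinarith [hw0 0, mul_nonneg (hw0 0) hB0]

noncomputable def DD (k N : ℕ) : ℝ := ∑ p ∈ Finset.range (N + 1),
  if p.Prime then (p : ℝ) ^ k * ((p : ℝ) - 1) ^ 2 else 0

noncomputable def NN (k N : ℕ) : ℝ := ∑ p ∈ Finset.range (N + 1),
  if p.Prime then (p : ℝ) ^ k * (stephensSum (p - 1) : ℝ) else 0

noncomputable def aa (p : ℕ) : ℝ :=
  if p.Prime then Real.log p * ((stephensSum (p - 1) : ℝ) / ((p : ℝ) - 1) ^ 2 - stephensConstant)
  else 0

lemma ww_log (k p : ℕ) (hp : p.Prime) :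
    ww k p * Real.log p = (p : ℝ) ^ k * ((p : ℝ) - 1) ^ 2 := by
  have h2 : (2 : ℝ) ≤ p := by exact_mod_cast hp.two_le
  have hl : 0 < Real.log p := Real.log_pos (by linarith)
  unfold ww
  field_simp

lemma NN_sub (k N : ℕ) : NN k N - stephensConstant * DD k N =
    ∑ p ∈ Finset.range (N + 1), ww k p * aa p := by
  unfold NN DD
  rw [Finset.mul_sum, ← Finset.sum_sub_distrib]
  refine Finset.sum_congr rfl fun p _ => ?_
  unfold aa
  split_ifs with hp
  · have h2 : (2 : ℝ) ≤ p := by exact_mod_cast hp.two_le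
    have h1 : (p : ℝ) - 1 ≠ 0 := by linarith
    rw [← mul_assoc (ww k p), ww_log k p hp]
    field_simp
  · simp

lemma sum_aa (N : ℕ) : ∑ p ∈ Finset.range (N + 1), aa p = FF N - stephensConstant * th 1 N := by
  unfold FF th
  rw [Finset.mul_sum, ← Finset.sum_sub_distrib]
  refine Finset.sum_congr rfl fun p _ => ?_
  unfold aa
  split_ifs with h1 h2 h2
  · ring
  · simp [h1] at h2
  · simp [h1] at h2
  · simp

lemma th_one_tendsto : Tendsto (fun N : ℕ => th 1 N / N) atTop (𝓝 1) := by
  simpa using pnt_ap 1 one_pos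

lemma aa_small : Tendsto (fun N : ℕ => (∑ p ∈ Finset.range (N + 1), aa p) / N) atTop (𝓝 0) := by
  have := FF_tendsto.sub (th_one_tendsto.const_mul stephensConstant)
  rw [mul_one, sub_self] at this
  refine this.congr fun N => ?_
  rw [sum_aa]; ring

lemma aa_bound (ε : ℝ) (hε : 0 < ε) : ∃ C : ℝ, 0 ≤ C ∧ ∀ N : ℕ,
    |∑ p ∈ Finset.range (N + 1), aa p| ≤ ε * N + C := by
  have h := (Metric.tendsto_atTop.1 aa_small) ε hε
  obtain ⟨N0, h⟩ := h
  refine ⟨∑ n ∈ Finset.range (N0 + 1), |∑ p ∈ Finset.range (n + 1), aa p|,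
    Finset.sum_nonneg fun _ _ => abs_nonneg _, fun N => ?_⟩
  rcases Nat.lt_or_ge N (N0 + 1) with hN | hN
  · have := Finset.single_le_sum (f := fun n => |∑ p ∈ Finset.range (n + 1), aa p|)
      (fun _ _ => abs_nonneg _) (Finset.mem_range.2 hN)
    have h0 : 0 ≤ ε * N := by positivity

    linarith
  · have h1 := h N (by omega)
    have hN' : (0 : ℝ) < N := by exact_mod_cast (by omega : 0 < N)
    rw [Real.dist_eq, sub_zero, abs_div, abs_of_pos hN', div_lt_iff₀ hN'] at h1
    have := Finset.sum_nonneg (s := Finset.range (N0 + 1))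
      (f := fun n => |∑ p ∈ Finset.range (n + 1), aa p|) fun _ _ => abs_nonneg _
    linarith

lemma DD_lower1 (k N M : ℕ) (hMN : M ≤ N) : ww k (M + 1) * (th 1 N - th 1 M) ≤ DD k N := by
  have hsub : Finset.range (M + 1) ⊆ Finset.range (N + 1) := Finset.range_mono (by omega)
  have h1 : th 1 N - th 1 M = ∑ p ∈ Finset.range (N + 1) \ Finset.range (M + 1),
      if p.Prime ∧ 1 ∣ p - 1 then Real.log p else 0 := by
    unfold th
    rw [← Finset.sum_sdiff hsub]; ring
  rw [h1, Finset.mul_sum]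
  unfold DD
  refine le_trans (Finset.sum_le_sum (g := fun p : ℕ =>
    if p.Prime then (p : ℝ) ^ k * ((p : ℝ) - 1) ^ 2 else 0) fun p hp => ?_)
    (Finset.sum_le_sum_of_subset_of_nonneg Finset.sdiff_subset fun p _ _ => ?_)
  · simp only [Finset.mem_sdiff, Finset.mem_range] at hp
    by_cases hpp : p.Prime
    · simp only [hpp, isUnit_one, IsUnit.dvd, and_self, if_true]
      rw [← ww_log k p hpp]
      exact mul_le_mul_of_nonneg_right (ww_mono k (by omega)) (Real.log_natCast_nonneg p)
    · simp [hpp]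
  · split_ifs
    · positivity
    · rfl

lemma ww_half (k N : ℕ) (hN : 2 ≤ N) : ww k N ≤ 2 ^ (k + 2) * ww k (N / 2 + 1) := by
  have hM : 1 ≤ N / 2 := by omega
  set M := N / 2 with hMdef
  have h1 : N ≤ 2 * M + 1 := by omega
  have h2 : M + 1 ≤ N := by omega
  have hM' : (1 : ℝ) ≤ M := by exact_mod_cast hM
  have h1' : (N : ℝ) ≤ 2 * M + 1 := by exact_mod_cast h1
  have h2' : (M : ℝ) + 1 ≤ N := by exact_mod_cast h2
  have hl : 0 < Real.log ((M : ℝ) + 1) := Real.log_pos (by linarith)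
  have hl' : Real.log ((M : ℝ) + 1) ≤ Real.log N := Real.log_le_log (by linarith) h2'
  unfold ww
  push_cast
  calc (N : ℝ) ^ k * ((N : ℝ) - 1) ^ 2 / Real.log N
      ≤ (2 * ((M : ℝ) + 1)) ^ k * (2 * (M : ℝ)) ^ 2 / Real.log ((M : ℝ) + 1) := by
        have h0 : 0 ≤ (N : ℝ) - 1 := by linarith
        gcongr <;> linarith
    _ = _ := by rw [mul_pow]; ring

lemma th_diff : ∀ᶠ N : ℕ in atTop, (N : ℝ) / 4 ≤ th 1 N - th 1 (N / 2) := by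
  have hhalf : Tendsto (fun N : ℕ => N / 2) atTop atTop :=
    Nat.tendsto_div_const_atTop (by norm_num)
  have h1 := th_one_tendsto.eventually (lt_mem_nhds (show (0.9 : ℝ) < 1 by norm_num))
  have h2 := hhalf.eventually
    (th_one_tendsto.eventually (gt_mem_nhds (show (1 : ℝ) < 1.1 by norm_num)))
  filter_upwards [h1, h2, eventually_ge_atTop 2] with N h1 h2 hN
  have hN' : (0 : ℝ) < N := by exact_mod_cast (by omega : 0 < N)
  have hM' : (0 : ℝ) < (N / 2 : ℕ) := by exact_mod_cast (by omega : 0 < N / 2)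
  rw [lt_div_iff₀ hN'] at h1
  rw [div_lt_iff₀ hM'] at h2
  have h3 : ((N / 2 : ℕ) : ℝ) ≤ (N : ℝ) / 2 := by
    have := Nat.cast_div_le (α := ℝ) (m := N) (n := 2)
    simpa using this
  linarith

lemma DD_lower (k : ℕ) : ∀ᶠ N : ℕ in atTop, ww k N * N ≤ (2 ^ (k + 2) * 4) * DD k N := by
  filter_upwards [th_diff, eventually_ge_atTop 2] with N h hN
  have h1 := DD_lower1 k N (N / 2) (Nat.div_le_self _ _)
  have h2 := ww_half k N hN
  have h3 : ww k (N / 2 + 1) * ((N : ℝ) / 4) ≤ DD k N :=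
    (mul_le_mul_of_nonneg_left h (ww_nonneg _ _)).trans h1
  have h4 : ww k N * N ≤ 2 ^ (k + 2) * ww k (N / 2 + 1) * N :=
    mul_le_mul_of_nonneg_right h2 (Nat.cast_nonneg N)
  have h5 := mul_le_mul_of_nonneg_left h3 (show (0 : ℝ) ≤ 2 ^ (k + 2) * 4 by positivity)
  linarith

lemma ratio_tendsto (k : ℕ) : Tendsto (fun N : ℕ => NN k N / DD k N) atTop (𝓝 stephensConstant) := by
  rw [Metric.tendsto_atTop']
  intro ε hε
  set K : ℝ := 2 ^ (k + 2) * 4 with hK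
  have hKpos : 0 < K := by positivity
  set δ := ε / (8 * K) with hδ
  have hδpos : 0 < δ := by positivity
  obtain ⟨C, hC0, hC⟩ := aa_bound δ hδpos
  have hlarge : ∀ᶠ N : ℕ in atTop, C / δ ≤ N :=
    tendsto_natCast_atTop_atTop.eventually (eventually_ge_atTop _)
  have hall := (hlarge.and ((DD_lower k).and (eventually_ge_atTop 2)))
  obtain ⟨N0, hN0⟩ := eventually_atTop.1 hall
  refine ⟨N0, fun N hN => ?_⟩
  obtain ⟨h1, h2, h3⟩ := hN0 N (le_of_lt hN)
  have h3' : (2 : ℝ) ≤ N := by exact_mod_cast h3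
  have hw : 0 < ww k N := by
    unfold ww
    have hl : 0 < Real.log N := Real.log_pos (by linarith)
    have : 0 < (N : ℝ) - 1 := by linarith
    positivity
  have hD : 0 < DD k N := by
    have : 0 < ww k N * N := by positivity
    exact pos_of_mul_pos_right (this.trans_le h2) hKpos.le
  have hab := abel_bound aa (ww k) (ww_mono k) (ww_nonneg k) N (δ * N + C) (fun n hn =>
    (hC n).trans (by
      have : (n : ℝ) ≤ N := by exact_mod_cast hn
      gcongr))
  rw [← NN_sub] at hab
  rw [div_le_iff₀ hδpos] at h1
  have e1 : NN k N / DD k N - stephensConstant = (NN k N - stephensConstant * DD k N) / DD k N := by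
    field_simp
  rw [Real.dist_eq, e1, abs_div, abs_of_pos hD, div_lt_iff₀ hD]
  calc _ ≤ 2 * (δ * N + C) * ww k N := hab
    _ ≤ 2 * (δ * N + N * δ) * ww k N := by gcongr
    _ = 4 * δ * (ww k N * N) := by ring
    _ ≤ 4 * δ * (K * DD k N) := by gcongr
    _ = ε / 2 * DD k N := by rw [hδ]; field_simp; ring
    _ < ε * DD k N := by gcongr; linarith

lemma sum_nth_prime (f : ℕ → ℝ) (N : ℕ) :
    ∑ i ∈ Finset.range N, f (Nat.nth Nat.Prime i) =
      ∑ p ∈ Finset.range (Nat.nth Nat.Prime N - 1 + 1), if p.Prime then f p else 0 := by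
  have hp : 0 < Nat.nth Nat.Prime N := (Nat.prime_nth_prime N).pos
  rw [Nat.sub_add_cancel hp, ← Finset.sum_filter]
  symm
  refine Finset.sum_bij' (fun p _ => Nat.count Nat.Prime p) (fun i _ => Nat.nth Nat.Prime i)
    ?_ ?_ ?_ ?_ ?_
  · intro p hp
    rw [Finset.mem_filter, Finset.mem_range] at hp
    rw [Finset.mem_range]
    by_contra h
    push Not at h
    have : Nat.nth Nat.Prime N ≤ Nat.nth Nat.Prime (Nat.count Nat.Prime p) :=
      Nat.nth_monotone Nat.infinite_setOfPred_prime h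
    rw [Nat.nth_count hp.2] at this
    omega
  · intro i hi
    rw [Finset.mem_range] at hi
    rw [Finset.mem_filter, Finset.mem_range]
    exact ⟨Nat.nth_strictMono Nat.infinite_setOfPred_prime hi, Nat.prime_nth_prime i⟩
  · intro p hp
    rw [Finset.mem_filter] at hp
    exact Nat.nth_count hp.2
  · intro i hi
    exact Nat.count_nth_of_infinite Nat.infinite_setOfPred_prime i
  · intro p hp
    rw [Finset.mem_filter] at hp
    simp only [Nat.nth_count hp.2]


end Part9

/-- For every `k ≥ 0`, the ratio `(∑_{i=1}^N p_i^k 𝒮(p_i - 1)) / (∑_{i=1}^N p_i^k (p_i - 1)²)`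
over the first `N` primes tends to Stephens' constant. -/
theorem stephens_ratio_formula (k : ℕ) :
    Tendsto (fun N : ℕ =>
        (∑ i ∈ Finset.range N,
          (Nat.nth Nat.Prime i : ℝ) ^ k * (stephensSum (Nat.nth Nat.Prime i - 1) : ℝ)) /
        (∑ i ∈ Finset.range N,
          (Nat.nth Nat.Prime i : ℝ) ^ k * ((Nat.nth Nat.Prime i : ℝ) - 1) ^ 2))
      atTop (nhds stephensConstant) := by
  have hM : Tendsto (fun N : ℕ => Nat.nth Nat.Prime N - 1) atTop atTop :=
    (tendsto_sub_atTop_nat 1).comp (Nat.nth_strictMono Nat.infinite_setOfPred_prime).tendsto_atTop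
  refine ((ratio_tendsto k).comp hM).congr fun N => ?_
  rw [sum_nth_prime (fun p => (p : ℝ) ^ k * (stephensSum (p - 1) : ℝ)),
    sum_nth_prime (fun p => (p : ℝ) ^ k * ((p : ℝ) - 1) ^ 2)]
  rfl
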